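/- arXiv:1804.02227 — 4 statements merged into one kernel-verified Lean document; each statement's English description precedes it below -/
import Mathlib

section
/- Let μ be a finite positive Borel measure on [0,1) which is a 1-logarithmic 1-Carleson measure. Then there exists a constant C > 0 such that for every f in the Hardy space H^1: (a) for every z in the unit disc 𝔻 the integral I_μ f(z) = ∫_{[0,1)} f(t)/(1 - t z) dμ(t) converges absolutely, the resulting function I_μ f is analytic in 𝔻, and (b) I_μ f belongs to the Dirichlet-type space 𝒟^1_0 with ‖I_μ f‖_{𝒟^1_0} ≤ C ‖f‖_{H^1}. -/
open MeasureTheory Set Metric Filter Asymptotics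
open scoped ENNReal

/-- Normalized area measure on `ℂ`: Lebesgue area divided by `π`,
so that the unit disc has total mass `1`. -/
noncomputable def dA : Measure ℂ := (ENNReal.ofReal Real.pi)⁻¹ • volume

/-- The (weighted) Bergman norm `‖f‖_{A^p_α} = ((α+1) ∫_𝔻 (1-|z|²)^α |f(z)|^p dA)^{1/p}`,
as an extended real number. -/
noncomputable def bergmanNorm (p α : ℝ) (f : ℂ → ℂ) : ℝ≥0∞ :=
  (ENNReal.ofReal (α + 1) *
    ∫⁻ z in ball (0 : ℂ) 1, ENNReal.ofReal ((1 - ‖z‖ ^ 2) ^ α * ‖f z‖ ^ p) ∂dA) ^ (1 / p)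

/-- The Dirichlet-type norm `‖f‖_{𝒟^p_α} = |f(0)| + ‖f′‖_{A^p_α}`. -/
noncomputable def dirichletNorm (p α : ℝ) (f : ℂ → ℂ) : ℝ≥0∞ :=
  ENNReal.ofReal ‖f 0‖ + bergmanNorm p α (deriv f)

/-- The Hardy `H^1` norm `sup_{0 ≤ r < 1} (2π)⁻¹ ∫_0^{2π} |f(re^{iθ})| dθ`. -/
noncomputable def hardyNorm (f : ℂ → ℂ) : ℝ≥0∞ :=
  ⨆ r ∈ Ico (0 : ℝ) 1,
    (ENNReal.ofReal (2 * Real.pi))⁻¹ *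
      ∫⁻ θ in Ioc (0 : ℝ) (2 * Real.pi),
        ENNReal.ofReal ‖f ((r : ℂ) * Complex.exp ((θ : ℂ) * Complex.I))‖

/-- The operator `I_μ f(z) = ∫_{[0,1)} f(t)/(1-tz) dμ(t)`. -/
noncomputable def Imu (μ : Measure ℝ) (f : ℂ → ℂ) (z : ℂ) : ℂ :=
  ∫ t : ℝ, f (t : ℂ) / (1 - (t : ℂ) * z) ∂μ

/-- The moment of order `n` of `μ`. -/
noncomputable def moment (μ : Measure ℝ) (n : ℕ) : ℝ := ∫ t : ℝ, t ^ n ∂μ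

/-- `M_∞(r, f) = sup_{|z| = r} |f(z)|`. -/
noncomputable def Minf (f : ℂ → ℂ) (r : ℝ) : ℝ := ⨆ z ∈ sphere (0 : ℂ) r, ‖f z‖


lemma normbound {t : ℝ} (ht0 : 0 ≤ t) (ht1 : t < 1) {z : ℂ} (hz : ‖z‖ ≤ 1) :
    1 - t ≤ ‖1 - (t:ℂ) * z‖ ∧ ‖1 - z‖ ≤ 2 * ‖1 - (t:ℂ) * z‖ := by
  have h1 : 1 - t ≤ ‖1 - (t:ℂ) * z‖ := by
    have h := norm_sub_norm_le (1:ℂ) ((t:ℂ) * z)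
    have h2 : ‖(t:ℂ) * z‖ ≤ t := by
      rw [norm_mul, Complex.norm_real, Real.norm_of_nonneg ht0]
      nlinarith
    rw [norm_one] at h
    linarith
  refine ⟨h1, ?_⟩
  have h3 : 1 - z = (1 - (t:ℂ) * z) - ((1 - t : ℝ) : ℂ) * z := by push_cast; ring
  have h4 : ‖1 - z‖ ≤ ‖1 - (t:ℂ) * z‖ + ‖((1 - t : ℝ) : ℂ) * z‖ := by
    conv_lhs => rw [h3]
    exact norm_sub_le _ _
  have h5 : ‖((1 - t : ℝ) : ℂ) * z‖ ≤ 1 - t := by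
    rw [norm_mul, Complex.norm_real, Real.norm_of_nonneg (by linarith)]
    nlinarith
  linarith

lemma cauchy_bound {f : ℂ → ℂ} (hf : DifferentiableOn ℂ f (ball (0 : ℂ) 1)) {r t : ℝ}
    (hr0 : 0 ≤ r) (hr1 : r < 1) (ht0 : 0 ≤ t) (ht1 : t < 1) :
    ENNReal.ofReal ‖f ((r:ℂ) * t)‖ ≤ 2 * ((ENNReal.ofReal (2 * Real.pi))⁻¹ *
      ∫⁻ θ in Ioc (0 : ℝ) (2 * Real.pi),
        ENNReal.ofReal (‖f ((r : ℂ) * Complex.exp ((θ : ℂ) * Complex.I))‖ *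
        (‖1 - Complex.exp ((θ : ℂ) * Complex.I)‖ /
          ‖1 - (t:ℂ) * Complex.exp ((θ : ℂ) * Complex.I)‖ ^ 2))) := by
  set G : ℂ → ℂ := fun z => f ((r:ℂ) * z) * (1 - z) / (1 - (t:ℂ) * z) with hG
  have hne : ∀ z : ℂ, ‖z‖ ≤ 1 → 1 - (t:ℂ) * z ≠ 0 := by
    intro z hz h
    have := (normbound ht0 ht1 hz).1
    rw [h, norm_zero] at this
    linarith
  have hGd : DifferentiableOn ℂ G (closedBall 0 1) := by
    have h1 : DifferentiableOn ℂ (fun z : ℂ => f ((r:ℂ) * z)) (closedBall 0 1) := by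
      refine hf.comp (by fun_prop) ?_
      intro z hz
      simp only [mem_closedBall, dist_zero_right, mem_ball] at hz ⊢
      rw [norm_mul, Complex.norm_real, Real.norm_of_nonneg hr0]
      nlinarith
    refine (h1.mul (by fun_prop)).div (by fun_prop) ?_
    intro z hz
    exact hne z (by simpa using hz)
  have hGc : DiffContOnCl ℂ G (ball 0 1) := by
    apply DifferentiableOn.diffContOnCl
    rwa [closure_ball _ one_ne_zero]
  have htb : (t:ℂ) ∈ ball (0:ℂ) 1 := by
    simp [abs_of_nonneg ht0, ht1]
  have hC := hGc.circleIntegral_sub_inv_smul htb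
  have hnorm : ‖f ((r:ℂ) * t)‖ₑ = ‖(1 + (t:ℂ))‖ₑ * ‖G t‖ₑ := by
    rw [← enorm_mul]
    congr 1
    have h1 : (1 + (t:ℂ)) ≠ 0 := by
      have : (1 + t) ≠ 0 := by linarith
      exact_mod_cast this
    have h2 : (1 - (t:ℂ)) ≠ 0 := by
      have : (1 - t) ≠ 0 := by linarith
      exact_mod_cast this
    have h3 : 1 - (t:ℂ) * t = (1 + t) * (1 - t) := by ring
    simp only [hG, h3]
    field_simp
  have h2 : ‖(1 + (t:ℂ))‖ₑ ≤ 2 := by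
    have : ‖(1 + (t:ℂ))‖ ≤ 2 := by
      refine (norm_add_le _ _).trans ?_
      simp [abs_of_nonneg ht0]; linarith
    rw [← ofReal_norm]
    exact ENNReal.ofReal_le_of_le_toReal (by simpa using this)
  have hpi : 0 < 2 * Real.pi := by positivity
  have hGt : ‖G t‖ₑ = (ENNReal.ofReal (2 * Real.pi))⁻¹ *
      ‖∮ z in C(0, 1), (z - (t:ℂ))⁻¹ • G z‖ₑ := by
    rw [hC, enorm_smul, ← mul_assoc]
    have : ‖(2 * (Real.pi:ℂ) * Complex.I)‖ₑ = ENNReal.ofReal (2 * Real.pi) := by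
      rw [← ofReal_norm]
      simp [abs_of_pos Real.pi_pos]
    rw [this, ENNReal.inv_mul_cancel (by simpa using Real.pi_pos) ENNReal.ofReal_ne_top, one_mul]
  rw [ofReal_norm, hnorm, hGt]
  refine mul_le_mul' h2 (mul_le_mul' le_rfl ?_)
  rw [circleIntegral, intervalIntegral.integral_of_le hpi.le]
  refine (enorm_integral_le_lintegral_enorm _).trans ?_
  refine lintegral_mono fun θ => ?_
  rw [← ofReal_norm]
  refine ENNReal.ofReal_le_ofReal (le_of_eq ?_)
  have hcm : circleMap 0 1 θ = Complex.exp ((θ:ℂ) * Complex.I) := by simp [circleMap]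
  simp only [deriv_circleMap, hcm, smul_eq_mul]
  set ζ := Complex.exp ((θ:ℂ) * Complex.I) with hζ
  have hz1 : ‖ζ‖ = 1 := by rw [hζ, Complex.norm_exp_ofReal_mul_I]
  have hd : ‖ζ - (t:ℂ)‖ = ‖1 - (t:ℂ) * ζ‖ := by
    have e1 : ‖ζ - (t:ℂ)‖ = ‖(starRingEnd ℂ) (ζ - t)‖ := (Complex.norm_conj _).symm
    have e2 : ζ * (starRingEnd ℂ) ζ = 1 := by
      rw [Complex.mul_conj, Complex.normSq_eq_norm_sq, hz1]; simp
    have e3 : 1 - (t:ℂ) * ζ = ζ * (starRingEnd ℂ) (ζ - t) := by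
      rw [map_sub, mul_sub, e2, Complex.conj_ofReal]; ring
    rw [e1, e3, norm_mul, hz1, one_mul]
  simp only [hG, norm_mul, norm_inv, norm_div, hd, hz1, Complex.norm_I]
  ring

lemma geo_sum {x : ℝ} (hx : 0 ≤ x) (n : ℕ) :
    ∑ k ∈ Finset.range n, min (x * 2 ^ k) (x * 2 ^ k)⁻¹ ≤ 6 := by
  have key : ∀ n : ℕ, ∑ k ∈ Finset.range n, min (x * 2 ^ k) (x * 2 ^ k)⁻¹ ≤
      6 * ((x * 2 ^ n) / (1 + x * 2 ^ n)) := by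
    intro n
    induction n with
    | zero => simp; positivity
    | succ n ih =>
      rw [Finset.sum_range_succ]
      have ha : 0 ≤ x * 2 ^ n := by positivity
      have e : x * 2 ^ (n+1) = 2 * (x * 2 ^ n) := by ring
      rw [e]
      generalize x * 2 ^ n = a at *
      have : min a a⁻¹ ≤ 6 * (2 * a / (1 + 2 * a)) - 6 * (a / (1 + a)) := by
        have e2 : 6 * (2 * a / (1 + 2 * a)) - 6 * (a / (1 + a)) = 6 * a / ((1 + a) * (1 + 2 * a)) := by
          field_simp; ring
        rw [e2]
        rcases le_total a 1 with h | h
        · refine (min_le_left _ _).trans ?_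
          rw [le_div_iff₀ (by positivity)]
          nlinarith [mul_nonneg ha (sub_nonneg.2 h), mul_nonneg ha ha, mul_nonneg (mul_nonneg ha ha) (sub_nonneg.2 h)]
        · refine (min_le_right _ _).trans ?_
          have : 0 < a := by linarith
          rw [le_div_iff₀ (by positivity), inv_mul_le_iff₀ this]
          nlinarith
      linarith
  refine (key n).trans ?_
  have ha : 0 ≤ x * 2 ^ n := by positivity
  have : (x * 2 ^ n) / (1 + x * 2 ^ n) ≤ 1 := by
    rw [div_le_one (by positivity)]; linarith
  linarith

lemma dyadic {t : ℝ} (ht0 : 0 ≤ t) (ht1 : t < 1) :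
    ∃ k : ℕ, 1 - t ≤ (1/2:ℝ) ^ k ∧ (1/2:ℝ) ^ (k+1) < 1 - t := by
  obtain ⟨k, h1, h2⟩ := exists_nat_pow_near_of_lt_one (x := 1 - t) (y := (1/2:ℝ)) (by linarith)
    (by linarith) (by norm_num) (by norm_num)
  exact ⟨k, h2, h1⟩

lemma log_bounds {t : ℝ} {k : ℕ} (h1 : 1 - t ≤ (1/2:ℝ) ^ k) (h2 : (1/2:ℝ) ^ (k+1) < 1 - t) :
    (k+1) * Real.log 2 ≤ Real.log (2 / (1 - t)) ∧ Real.log (2 / (1 - t)) ≤ (k+2) * Real.log 2 := by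
  have h0 : 0 < 1 - t := lt_trans (by positivity) h2
  have e1 : (k+1) * Real.log 2 = Real.log (2 ^ (k+1)) := by rw [Real.log_pow]; push_cast; ring
  have e2 : (k+2) * Real.log 2 = Real.log (2 ^ (k+2)) := by rw [Real.log_pow]; push_cast; ring
  rw [e1, e2]
  have e3 : (2:ℝ) ^ k * (1/2) ^ k = 1 := by rw [← mul_pow]; norm_num
  have hk : (0:ℝ) < 2 ^ k := by positivity
  constructor
  · apply Real.log_le_log (by positivity)
    rw [le_div_iff₀ h0, pow_succ]
    nlinarith
  · apply Real.log_le_log (by positivity)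
    rw [div_le_iff₀ h0]
    rw [pow_succ] at h2
    rw [pow_add]
    nlinarith

lemma kernel_mu (μ : Measure ℝ) [IsFiniteMeasure μ]
    (hsupp : μ (Ico (0 : ℝ) 1)ᶜ = 0) {C : ℝ} (hC : 0 < C)
    (hμ : ∀ t ∈ Ico (0 : ℝ) 1,
      (μ (Ico t 1)).toReal * Real.log (2 / (1 - t)) ≤ C * (1 - t)) {ζ : ℂ} (hζ : ‖ζ‖ ≤ 1) :
    ∫⁻ t, ENNReal.ofReal (Real.log (2 / (1 - t)) * (‖1 - ζ‖ / ‖1 - (t:ℂ) * ζ‖ ^ 2)) ∂μ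
      ≤ ENNReal.ofReal (48 * C) := by
  set δ := ‖1 - ζ‖ with hδ
  have hδ0 : 0 ≤ δ := norm_nonneg _
  have hl2 : 0 < Real.log 2 := Real.log_pos (by norm_num)
  set m : ℕ → ℝ := fun k => min (δ * 2 ^ k) (δ * 2 ^ k)⁻¹ with hm
  have hm0 : ∀ k, 0 ≤ m k := fun k => le_min (by positivity) (by positivity)
  set c : ℕ → ℝ := fun k => (k+2) * Real.log 2 * (4 * 2 ^ k * m k) with hc
  have hc0 : ∀ k, 0 ≤ c k := fun k => by have := hm0 k; positivity
  have hae : ∀ᵐ t ∂μ, t ∈ Ico (0:ℝ) 1 := by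
    rw [ae_iff]; exact hsupp
  calc ∫⁻ t, ENNReal.ofReal (Real.log (2 / (1 - t)) * (δ / ‖1 - (t:ℂ) * ζ‖ ^ 2)) ∂μ
      ≤ ∫⁻ t, ∑' k, (Ico (1 - (1/2:ℝ) ^ k) 1).indicator (fun _ => ENNReal.ofReal (c k)) t ∂μ := by
        refine lintegral_mono_ae ?_
        filter_upwards [hae] with t ht
        obtain ⟨k, h1, h2⟩ := dyadic ht.1 ht.2
        refine le_trans ?_ (ENNReal.le_tsum k)
        rw [indicator_of_mem (show t ∈ Ico (1 - (1/2:ℝ) ^ k) 1 from ⟨by linarith, ht.2⟩)]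
        apply ENNReal.ofReal_le_ofReal
        obtain ⟨b1, b2⟩ := normbound ht.1 ht.2 hζ
        set D := ‖1 - (t:ℂ) * ζ‖
        have hD : 0 < D := by linarith [ht.2]
        have e3 : (2:ℝ) ^ k * (1/2) ^ k = 1 := by rw [← mul_pow]; norm_num
        have hk : (0:ℝ) < 2 ^ k := by positivity
        have hD2 : 1 ≤ 2 * 2 ^ k * D := by
          rw [pow_succ] at h2
          nlinarith
        refine mul_le_mul (log_bounds h1 h2).2 ?_ (by positivity) (by positivity)
        have hmin : 4 * 2 ^ k * m k = min (4 * 2 ^ k * (δ * 2 ^ k)) (4 * 2 ^ k * (δ * 2 ^ k)⁻¹) := by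
          rw [hm]; exact mul_min_of_nonneg _ _ (by positivity)
        rw [hmin]
        refine le_min ?_ ?_
        · rw [div_le_iff₀ (by positivity)]
          have : 1 ≤ (2 * 2 ^ k * D) ^ 2 := one_le_pow₀ hD2
          nlinarith
        · rcases hδ0.eq_or_lt with h | h
          · rw [← h]; simp
          · have e : 4 * 2 ^ k * (δ * 2 ^ k)⁻¹ = 4 / δ := by field_simp
            rw [e, div_le_div_iff₀ (by positivity) h]
            nlinarith
    _ = ∑' k, ENNReal.ofReal (c k) * μ (Ico (1 - (1/2:ℝ) ^ k) 1) := by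
        rw [lintegral_tsum]
        · congr 1; ext k
          rw [lintegral_indicator_const measurableSet_Ico]
        · intro k
          exact (measurable_const.indicator measurableSet_Ico).aemeasurable
    _ ≤ ∑' k, ENNReal.ofReal (8 * C * m k) := by
        refine ENNReal.tsum_le_tsum fun k => ?_
        rw [← ENNReal.ofReal_toReal (measure_ne_top μ (Ico (1 - (1/2:ℝ) ^ k) 1)),
          ← ENNReal.ofReal_mul (hc0 k)]
        apply ENNReal.ofReal_le_ofReal
        have hp1 : (1/2:ℝ) ^ k ≤ 1 := pow_le_one₀ (by norm_num) (by norm_num)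
        have hp0 : 0 < (1/2:ℝ) ^ k := by positivity
        have h := hμ (1 - (1/2:ℝ) ^ k) ⟨by linarith, by linarith⟩
        have hL := (log_bounds (t := 1 - (1/2:ℝ) ^ k) (k := k) (by linarith)
          (by rw [pow_succ]; linarith)).1
        set M := (μ (Ico (1 - (1/2:ℝ) ^ k) 1)).toReal
        have hM : 0 ≤ M := ENNReal.toReal_nonneg
        have e1 : (1 - (1 - (1/2:ℝ) ^ k)) = (1/2:ℝ) ^ k := by ring
        have h3 : M * ((k+1) * Real.log 2) ≤ C * (1/2:ℝ) ^ k := by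
          refine (mul_le_mul_of_nonneg_left hL hM).trans (h.trans (le_of_eq (by rw [e1])))
        have e3 : (2:ℝ) ^ k * (1/2) ^ k = 1 := by rw [← mul_pow]; norm_num
        have h4 : (k+2) * Real.log 2 * M ≤ 2 * (C * (1/2:ℝ) ^ k) := by
          have : 0 ≤ (k:ℝ) * (Real.log 2 * M) := by positivity
          nlinarith
        calc c k * M = ((k+2) * Real.log 2 * M) * (4 * 2 ^ k * m k) := by rw [hc]; ring
          _ ≤ (2 * (C * (1/2:ℝ) ^ k)) * (4 * 2 ^ k * m k) :=
            mul_le_mul_of_nonneg_right h4 (by have := hm0 k; positivity)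
          _ = 8 * C * m k * (2 ^ k * (1/2) ^ k) := by ring
          _ = 8 * C * m k := by rw [e3, mul_one]
    _ ≤ ENNReal.ofReal (48 * C) := by
        refine ENNReal.tsum_le_of_sum_range_le fun n => ?_
        rw [← ENNReal.ofReal_sum_of_nonneg (fun k _ => by have := hm0 k; positivity)]
        apply ENNReal.ofReal_le_ofReal
        rw [← Finset.mul_sum]
        have := geo_sum hδ0 n
        have h8 : 0 ≤ 8 * C := by positivity
        have := mul_le_mul_of_nonneg_left this h8
        linarith

lemma kernel_area {t : ℝ} (ht0 : 0 ≤ t) (ht1 : t < 1) :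
    ∫⁻ z in ball (0:ℂ) 1, ENNReal.ofReal (‖1 - (t:ℂ) * z‖ ^ 2)⁻¹ ∂dA ≤
      ENNReal.ofReal (16 / Real.log 2 * Real.log (2 / (1 - t))) := by
  obtain ⟨N, h1, h2⟩ := dyadic ht0 ht1
  have hl2 : 0 < Real.log 2 := Real.log_pos (by norm_num)
  have hdA : ∀ k : ℕ, dA (ball (1:ℂ) (2 * (1/2) ^ k)) = ENNReal.ofReal (4 * (1/4) ^ k) := by
    intro k
    rw [dA, Measure.smul_apply, Complex.volume_ball, smul_eq_mul]
    have : (NNReal.pi : ℝ≥0∞) = ENNReal.ofReal Real.pi := by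
      rw [← NNReal.coe_real_pi, ENNReal.ofReal_coe_nnreal]
    rw [this, mul_comm, mul_assoc, ENNReal.mul_inv_cancel (by simpa using Real.pi_pos) (by simp),
      mul_one, ← ENNReal.ofReal_pow (by positivity)]
    congr 1
    rw [mul_pow, ← pow_mul, mul_comm k 2, pow_mul]
    norm_num
  calc ∫⁻ z in ball (0:ℂ) 1, ENNReal.ofReal (‖1 - (t:ℂ) * z‖ ^ 2)⁻¹ ∂dA
      ≤ ∫⁻ z in ball (0:ℂ) 1, ∑ k ∈ Finset.range (N+1),
          (ball (1:ℂ) (2 * (1/2) ^ k)).indicator (fun _ => ENNReal.ofReal (4 * 4 ^ k)) z ∂dA := by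
        refine setLIntegral_mono' measurableSet_ball fun z hz => ?_
        have hz1 : ‖z‖ ≤ 1 := by simpa using (mem_ball_zero_iff.1 hz).le
        obtain ⟨b1, b2⟩ := normbound ht0 ht1 hz1
        set D := ‖1 - (t:ℂ) * z‖
        have hD : 0 < D := by linarith
        -- find the index
        have hex : ∃ k ≤ N, ‖1 - z‖ < 2 * (1/2) ^ k ∧ 1 ≤ 2 * 2 ^ k * D := by
          have hmain : ∀ n : ℕ, (∃ k ≤ n, ‖1 - z‖ < 2 * (1/2:ℝ) ^ k ∧ 1 ≤ 2 * 2 ^ k * D) ∨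
              ‖1 - z‖ < 2 * (1/2:ℝ) ^ n := by
            intro n
            induction n with
            | zero =>
              right
              have := norm_sub_le (1:ℂ) z
              rw [norm_one] at this
              have := mem_ball_zero_iff.1 hz
              simp; linarith
            | succ n ih =>
              rcases ih with ⟨k, hk, h⟩ | h
              · exact Or.inl ⟨k, by omega, h⟩
              · by_cases h' : ‖1 - z‖ < 2 * (1/2:ℝ) ^ (n+1)
                · exact Or.inr h'
                · left
                  refine ⟨n, by omega, h, ?_⟩
                  rw [pow_succ] at h'
                  have e3 : (2:ℝ) ^ n * (1/2) ^ n = 1 := by rw [← mul_pow]; norm_num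
                  have hk : (0:ℝ) < 2 ^ n := by positivity
                  nlinarith
          rcases hmain N with h | h
          · exact h
          · refine ⟨N, le_rfl, h, ?_⟩
            have e3 : (2:ℝ) ^ N * (1/2) ^ N = 1 := by rw [← mul_pow]; norm_num
            have hk : (0:ℝ) < 2 ^ N := by positivity
            rw [pow_succ] at h2
            nlinarith
        obtain ⟨k, hk, hb, hD2⟩ := hex
        refine le_trans ?_ (Finset.single_le_sum (fun _ _ => zero_le)
          (Finset.mem_range.2 (Nat.lt_succ_of_le hk)))
        rw [indicator_of_mem (by rw [mem_ball, dist_comm, dist_eq_norm]; exact hb)]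
        apply ENNReal.ofReal_le_ofReal
        have : 1 ≤ (2 * 2 ^ k * D) ^ 2 := one_le_pow₀ hD2
        rw [inv_le_iff_one_le_mul₀ (by positivity)]
        have e4 : (4:ℝ) ^ k = 2 ^ k * 2 ^ k := by rw [← mul_pow]; norm_num
        rw [e4]
        nlinarith
    _ ≤ ∫⁻ z, ∑ k ∈ Finset.range (N+1),
          (ball (1:ℂ) (2 * (1/2) ^ k)).indicator (fun _ => ENNReal.ofReal (4 * 4 ^ k)) z ∂dA :=
        setLIntegral_le_lintegral _ _
    _ = ∑ k ∈ Finset.range (N+1), ENNReal.ofReal 16 := by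
        rw [lintegral_finsetSum]
        · refine Finset.sum_congr rfl fun k _ => ?_
          rw [lintegral_indicator_const measurableSet_ball, hdA,
            ← ENNReal.ofReal_mul (by positivity)]
          congr 1
          have : (4:ℝ) ^ k * (1/4) ^ k = 1 := by rw [← mul_pow]; norm_num
          linear_combination 16 * this
        · intro k _
          exact measurable_const.indicator measurableSet_ball
    _ ≤ _ := by
        rw [Finset.sum_const, Finset.card_range, nsmul_eq_mul, ← ENNReal.ofReal_natCast,
          ← ENNReal.ofReal_mul (by positivity)]
        apply ENNReal.ofReal_le_ofReal
        have := (log_bounds h1 h2).1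
        rw [div_mul_eq_mul_div, le_div_iff₀ hl2]
        push_cast
        nlinarith


lemma aesm_f (μ : Measure ℝ) (hsupp : μ (Ico (0 : ℝ) 1)ᶜ = 0) {f : ℂ → ℂ}
    (hf : DifferentiableOn ℂ f (ball (0 : ℂ) 1)) {r : ℝ} (hr0 : 0 ≤ r) (hr1 : r ≤ 1) :
    AEStronglyMeasurable (fun t : ℝ => f ((r:ℂ) * t)) μ := by
  have hae : ∀ᵐ t ∂μ, t ∈ Ico (0:ℝ) 1 := by
    rw [ae_iff]; exact hsupp
  rw [← Measure.restrict_eq_self_of_ae_mem hae]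
  refine ContinuousOn.aestronglyMeasurable ?_ measurableSet_Ico
  refine hf.continuousOn.comp (by fun_prop) ?_
  intro t ht
  rw [mem_ball_zero_iff, norm_mul, Complex.norm_real, Complex.norm_real,
    Real.norm_of_nonneg hr0, Real.norm_of_nonneg ht.1]
  nlinarith [ht.1, ht.2]

lemma L_nonneg {t : ℝ} (ht : t ∈ Ico (0:ℝ) 1) : Real.log 2 ≤ Real.log (2 / (1 - t)) := by
  apply Real.log_le_log (by norm_num)
  rw [le_div_iff₀ (by linarith [ht.2])]
  linarith [ht.1]

lemma embed_r (μ : Measure ℝ) [IsFiniteMeasure μ]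
    (hsupp : μ (Ico (0 : ℝ) 1)ᶜ = 0) {C : ℝ} (hC : 0 < C)
    (hμ : ∀ t ∈ Ico (0 : ℝ) 1,
      (μ (Ico t 1)).toReal * Real.log (2 / (1 - t)) ≤ C * (1 - t)) {f : ℂ → ℂ}
    (hf : DifferentiableOn ℂ f (ball (0 : ℂ) 1)) {r : ℝ} (hr0 : 0 ≤ r) (hr1 : r < 1) :
    ∫⁻ t, ENNReal.ofReal (Real.log (2 / (1 - t))) * ENNReal.ofReal ‖f ((r:ℂ) * t)‖ ∂μ ≤
      ENNReal.ofReal (96 * C) * hardyNorm f := by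
  have hae : ∀ᵐ t ∂μ, t ∈ Ico (0:ℝ) 1 := by
    rw [ae_iff]; exact hsupp
  have hl2 : 0 < Real.log 2 := Real.log_pos (by norm_num)
  set c : ℝ≥0∞ := (ENNReal.ofReal (2 * Real.pi))⁻¹ with hc
  have hctop : c ≠ ∞ := by
    rw [hc]; simp [Real.pi_pos]
  set F : ℝ → ℝ≥0∞ := fun θ => ENNReal.ofReal ‖f ((r : ℂ) * Complex.exp ((θ : ℂ) * Complex.I))‖ with hF
  have hFm : Measurable F := by
    have : Continuous (fun θ : ℝ => f ((r : ℂ) * Complex.exp ((θ : ℂ) * Complex.I))) := by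
      refine hf.continuousOn.comp_continuous (by fun_prop) ?_
      intro θ
      rw [mem_ball_zero_iff, norm_mul, Complex.norm_exp_ofReal_mul_I, Complex.norm_real,
        Real.norm_of_nonneg hr0]
      linarith
    exact ENNReal.measurable_ofReal.comp this.norm.measurable
  set K : ℝ → ℝ → ℝ≥0∞ := fun t θ => ENNReal.ofReal (Real.log (2 / (1 - t)) *
    (‖1 - Complex.exp ((θ : ℂ) * Complex.I)‖ /
          ‖1 - (t:ℂ) * Complex.exp ((θ : ℂ) * Complex.I)‖ ^ 2)) with hK
  have hKm : Measurable (fun p : ℝ × ℝ => K p.1 p.2) := by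
    simp only [hK]
    fun_prop
  calc ∫⁻ t, ENNReal.ofReal (Real.log (2 / (1 - t))) * ENNReal.ofReal ‖f ((r:ℂ) * t)‖ ∂μ
      ≤ ∫⁻ t, 2 * c * (∫⁻ θ in Ioc (0 : ℝ) (2 * Real.pi), F θ * K t θ) ∂μ := by
        refine lintegral_mono_ae ?_
        filter_upwards [hae] with t ht
        refine (mul_le_mul' le_rfl (cauchy_bound hf hr0 hr1 ht.1 ht.2)).trans ?_
        rw [← hc, ← mul_assoc 2 c, mul_left_comm]
        refine mul_le_mul' le_rfl ?_
        rw [← lintegral_const_mul' _ _ ENNReal.ofReal_ne_top]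
        refine lintegral_mono fun θ => ?_
        simp only [hF, hK]
        have hL : 0 ≤ Real.log (2 / (1 - t)) := hl2.le.trans (L_nonneg ht)
        rw [← ENNReal.ofReal_mul hL, ← ENNReal.ofReal_mul (norm_nonneg _)]
        apply ENNReal.ofReal_le_ofReal
        apply le_of_eq
        ring
    _ = 2 * c * ∫⁻ t, (∫⁻ θ in Ioc (0 : ℝ) (2 * Real.pi), F θ * K t θ) ∂μ :=
        lintegral_const_mul' _ _ (ENNReal.mul_ne_top (by simp) hctop)
    _ = 2 * c * ∫⁻ θ in Ioc (0 : ℝ) (2 * Real.pi), ∫⁻ t, F θ * K t θ ∂μ := by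
        rw [lintegral_lintegral_swap]
        exact ((hFm.comp measurable_snd).mul hKm).aemeasurable
    _ ≤ 2 * c * ∫⁻ θ in Ioc (0 : ℝ) (2 * Real.pi), F θ * ENNReal.ofReal (48 * C) := by
        refine mul_le_mul' le_rfl (lintegral_mono fun θ => ?_)
        rw [lintegral_const_mul' _ _ (by simp [hF])]
        refine mul_le_mul' le_rfl ?_
        exact kernel_mu μ hsupp hC hμ (by rw [Complex.norm_exp_ofReal_mul_I])
    _ = ENNReal.ofReal (96 * C) * (c * ∫⁻ θ in Ioc (0 : ℝ) (2 * Real.pi), F θ) := by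
        rw [lintegral_mul_const' _ _ ENNReal.ofReal_ne_top]
        have : ENNReal.ofReal (96 * C) = 2 * ENNReal.ofReal (48 * C) := by
          rw [← ENNReal.ofReal_ofNat, ← ENNReal.ofReal_mul (by norm_num)]
          congr 1; ring
        rw [this]; ring
    _ ≤ _ := by
        refine mul_le_mul' le_rfl ?_
        exact le_iSup₂_of_le (f := fun (r : ℝ) (_ : r ∈ Ico (0:ℝ) 1) =>
          (ENNReal.ofReal (2 * Real.pi))⁻¹ * ∫⁻ θ in Ioc (0 : ℝ) (2 * Real.pi),
          ENNReal.ofReal ‖f ((r : ℂ) * Complex.exp ((θ : ℂ) * Complex.I))‖) r ⟨hr0, hr1⟩ le_rfl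

lemma embed_one (μ : Measure ℝ) [IsFiniteMeasure μ]
    (hsupp : μ (Ico (0 : ℝ) 1)ᶜ = 0) {C : ℝ} (hC : 0 < C)
    (hμ : ∀ t ∈ Ico (0 : ℝ) 1,
      (μ (Ico t 1)).toReal * Real.log (2 / (1 - t)) ≤ C * (1 - t)) {f : ℂ → ℂ}
    (hf : DifferentiableOn ℂ f (ball (0 : ℂ) 1)) :
    ∫⁻ t, ENNReal.ofReal (Real.log (2 / (1 - t))) * ENNReal.ofReal ‖f t‖ ∂μ ≤
      ENNReal.ofReal (96 * C) * hardyNorm f := by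
  have hae : ∀ᵐ t ∂μ, t ∈ Ico (0:ℝ) 1 := by
    rw [ae_iff]; exact hsupp
  set r : ℕ → ℝ := fun n => 1 - 1 / ((n:ℝ) + 1) with hr
  have hr0 : ∀ n, 0 ≤ r n := by
    intro n
    have : 1 / ((n:ℝ) + 1) ≤ 1 := by
      rw [div_le_one (by positivity)]; linarith [Nat.cast_nonneg (α := ℝ) n]
    simp only [hr]; linarith
  have hr1 : ∀ n, r n < 1 := by
    intro n
    have : 0 < 1 / ((n:ℝ) + 1) := by positivity
    simp only [hr]; linarith
  have hrt : Tendsto r atTop (nhds 1) := by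
    have := (tendsto_one_div_add_atTop_nhds_zero_nat (𝕜 := ℝ)).const_sub 1
    simpa [hr] using this
  set g : ℕ → ℝ → ℝ≥0∞ := fun n t =>
    ENNReal.ofReal (Real.log (2 / (1 - t))) * ENNReal.ofReal ‖f ((r n:ℂ) * t)‖ with hg
  calc ∫⁻ t, ENNReal.ofReal (Real.log (2 / (1 - t))) * ENNReal.ofReal ‖f t‖ ∂μ
      ≤ ∫⁻ t, liminf (fun n => g n t) atTop ∂μ := by
        refine lintegral_mono_ae ?_
        filter_upwards [hae] with t ht
        refine le_of_eq (Tendsto.liminf_eq ?_).symm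
        have h1 : ContinuousAt f (t:ℂ) := by
          refine (hf.differentiableAt (isOpen_ball.mem_nhds ?_)).continuousAt
          rw [mem_ball_zero_iff, Complex.norm_real, Real.norm_of_nonneg ht.1]
          exact ht.2
        have h2 : Tendsto (fun n => ((r n : ℝ):ℂ) * t) atTop (nhds (t:ℂ)) := by
          have h3 : Tendsto (fun n => ((r n : ℝ):ℂ)) atTop (nhds ((1:ℝ):ℂ)) :=
            (Complex.continuous_ofReal.tendsto _).comp hrt
          simpa using h3.mul_const (t:ℂ)
        have h4 := (h1.tendsto.comp h2).norm
        have h5 := (ENNReal.continuous_ofReal.tendsto _).comp h4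
        exact ENNReal.Tendsto.const_mul h5 (Or.inr ENNReal.ofReal_ne_top)
    _ ≤ liminf (fun n => ∫⁻ t, g n t ∂μ) atTop := by
        refine lintegral_liminf_le' fun n => ?_
        have h1 := aesm_f μ hsupp hf (hr0 n) (hr1 n).le
        exact AEMeasurable.mul (by fun_prop) (h1.norm.aemeasurable.ennreal_ofReal)
    _ ≤ liminf (fun _ : ℕ => ENNReal.ofReal (96 * C) * hardyNorm f) atTop := by
        refine liminf_le_liminf (Eventually.of_forall fun n => ?_)
        exact embed_r μ hsupp hC hμ hf (hr0 n) (hr1 n)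
    _ = _ := by simp


lemma imu_deriv (μ : Measure ℝ) [IsFiniteMeasure μ] (hsupp : μ (Ico (0 : ℝ) 1)ᶜ = 0) {f : ℂ → ℂ}
    (hint : Integrable (fun t : ℝ => f t) μ) {z : ℂ} (hz : z ∈ ball (0:ℂ) 1) :
    Integrable (fun t : ℝ => f (t : ℂ) / (1 - (t : ℂ) * z)) μ ∧
    HasDerivAt (Imu μ f) (∫ t : ℝ, f t * t / (1 - (t:ℂ) * z) ^ 2 ∂μ) z := by
  have hae : ∀ᵐ t ∂μ, t ∈ Ico (0:ℝ) 1 := by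
    rw [ae_iff]; exact hsupp
  have hmeas : ∀ w : ℂ, AEStronglyMeasurable (fun t : ℝ => f (t : ℂ) / (1 - (t : ℂ) * w)) μ := by
    intro w
    have h : AEStronglyMeasurable (fun t : ℝ => (1 - (t : ℂ) * w)⁻¹) μ :=
      Measurable.aestronglyMeasurable (by fun_prop)
    simp only [div_eq_mul_inv]
    exact hint.aestronglyMeasurable.mul h
  have hz1 : ‖z‖ < 1 := mem_ball_zero_iff.1 hz
  set ρ := (1 + ‖z‖) / 2 with hρ
  have hρ1 : ρ < 1 := by rw [hρ]; linarith
  have hzρ : ‖z‖ < ρ := by rw [hρ]; linarith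
  have hlow : ∀ t ∈ Ico (0:ℝ) 1, ∀ w ∈ ball (0:ℂ) ρ, 1 - ρ ≤ ‖1 - (t:ℂ) * w‖ := by
    intro t ht w hw
    have h := norm_sub_norm_le (1:ℂ) ((t:ℂ) * w)
    have hw' := mem_ball_zero_iff.1 hw
    rw [norm_one, norm_mul, Complex.norm_real, Real.norm_of_nonneg ht.1] at h
    have := norm_nonneg w
    nlinarith [ht.1, ht.2]
  have hI : Integrable (fun t : ℝ => f (t : ℂ) / (1 - (t : ℂ) * z)) μ := by
    refine (hint.norm.mul_const (1 - ρ)⁻¹).mono' (hmeas z) ?_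
    filter_upwards [hae] with t ht
    rw [norm_div, div_eq_mul_inv]
    have := hlow t ht z (mem_ball_zero_iff.2 hzρ)
    have h0 : 0 < 1 - ρ := by linarith
    gcongr
  refine ⟨hI, ?_⟩
  refine (hasDerivAt_integral_of_dominated_loc_of_deriv_le (μ := μ)
    (F := fun z (t:ℝ) => f (t : ℂ) / (1 - (t : ℂ) * z))
    (F' := fun z (t:ℝ) => f t * t / (1 - (t:ℂ) * z) ^ 2)
    (bound := fun t => ‖f t‖ * ((1 - ρ) ^ 2)⁻¹)
    (isOpen_ball.mem_nhds (mem_ball_zero_iff.2 hzρ))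
    (Eventually.of_forall hmeas) hI ?_ ?_ (hint.norm.mul_const _) ?_).2
  · have h : AEStronglyMeasurable (fun t : ℝ => (t:ℂ) * ((1 - (t : ℂ) * z) ^ 2)⁻¹) μ :=
      Measurable.aestronglyMeasurable (by fun_prop)
    simp only [div_eq_mul_inv, mul_assoc]
    exact hint.aestronglyMeasurable.mul h
  · filter_upwards [hae] with t ht w hw
    have := hlow t ht w hw
    have h0 : 0 < 1 - ρ := by linarith
    rw [norm_div, norm_mul, Complex.norm_real, Real.norm_of_nonneg ht.1, norm_pow, div_eq_mul_inv]
    have h1 : ‖f t‖ * t ≤ ‖f t‖ := by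
      have := norm_nonneg (f t)
      nlinarith [ht.2]
    gcongr
  · filter_upwards [hae] with t ht w hw
    have h0 := hlow t ht w hw
    have hne : 1 - (t:ℂ) * w ≠ 0 := by
      intro h; rw [h, norm_zero] at h0; linarith
    have h1 : HasDerivAt (fun w : ℂ => 1 - (t:ℂ) * w) (-(t:ℂ)) w := by
      simpa using ((hasDerivAt_id w).const_mul (t:ℂ)).const_sub 1
    have h2 := (hasDerivAt_const w (f t)).div h1 hne
    have e : f t * t / (1 - (t:ℂ) * w) ^ 2 =
        (0 * (1 - (t:ℂ) * w) - f t * -(t:ℂ)) / (1 - (t:ℂ) * w) ^ 2 := by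
      congr 1
      ring
    rw [e]
    exact h2

instance : SFinite dA := by unfold dA; infer_instance

lemma berg_bound (μ : Measure ℝ) [IsFiniteMeasure μ] (hsupp : μ (Ico (0 : ℝ) 1)ᶜ = 0) {f : ℂ → ℂ}
    (hint : Integrable (fun t : ℝ => f t) μ) :
    bergmanNorm 1 0 (deriv (Imu μ f)) ≤ ENNReal.ofReal (16 / Real.log 2) *
      ∫⁻ t, ENNReal.ofReal (Real.log (2 / (1 - t))) * ENNReal.ofReal ‖f t‖ ∂μ := by
  have hae : ∀ᵐ t ∂μ, t ∈ Ico (0:ℝ) 1 := by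
    rw [ae_iff]; exact hsupp
  have hl2 : 0 < Real.log 2 := Real.log_pos (by norm_num)
  have e0 : bergmanNorm 1 0 (deriv (Imu μ f)) =
      ∫⁻ z in ball (0 : ℂ) 1, ENNReal.ofReal ‖deriv (Imu μ f) z‖ ∂dA := by
    simp [bergmanNorm]
  rw [e0]
  calc ∫⁻ z in ball (0 : ℂ) 1, ENNReal.ofReal ‖deriv (Imu μ f) z‖ ∂dA
      ≤ ∫⁻ z in ball (0 : ℂ) 1, ∫⁻ t : ℝ, ENNReal.ofReal ‖f t‖ *
          ENNReal.ofReal (‖1 - (t:ℂ) * z‖ ^ 2)⁻¹ ∂μ ∂dA := by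
        refine setLIntegral_mono' measurableSet_ball fun z hz => ?_
        rw [(imu_deriv μ hsupp hint hz).2.deriv, ofReal_norm]
        refine (enorm_integral_le_lintegral_enorm _).trans (lintegral_mono_ae ?_)
        filter_upwards [hae] with t ht
        rw [← ofReal_norm, ← ENNReal.ofReal_mul (norm_nonneg _)]
        apply ENNReal.ofReal_le_ofReal
        rw [norm_div, norm_mul, Complex.norm_real, Real.norm_of_nonneg ht.1, norm_pow,
          div_eq_mul_inv]
        have h1 : ‖f t‖ * t ≤ ‖f t‖ := by
          have := norm_nonneg (f t)
          nlinarith [ht.2]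
        gcongr
    _ = ∫⁻ t : ℝ, ∫⁻ z in ball (0 : ℂ) 1, ENNReal.ofReal ‖f t‖ *
          ENNReal.ofReal (‖1 - (t:ℂ) * z‖ ^ 2)⁻¹ ∂dA ∂μ := by
        rw [lintegral_lintegral_swap]
        have h1 : AEMeasurable (fun t : ℝ => ENNReal.ofReal ‖f t‖) μ :=
          hint.aestronglyMeasurable.norm.aemeasurable.ennreal_ofReal
        have h2 : AEMeasurable (fun p : ℂ × ℝ => ENNReal.ofReal ‖f p.2‖)
          ((dA.restrict (ball (0 : ℂ) 1)).prod μ) := h1.comp_snd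
        have h3 : Measurable (fun p : ℂ × ℝ =>
          ENNReal.ofReal (‖1 - (p.2:ℂ) * p.1‖ ^ 2)⁻¹) := by fun_prop
        exact h2.mul h3.aemeasurable
    _ ≤ ∫⁻ t : ℝ, ENNReal.ofReal (16 / Real.log 2) *
          (ENNReal.ofReal (Real.log (2 / (1 - t))) * ENNReal.ofReal ‖f t‖) ∂μ := by
        refine lintegral_mono_ae ?_
        filter_upwards [hae] with t ht
        rw [lintegral_const_mul' _ _ ENNReal.ofReal_ne_top]
        refine (mul_le_mul' le_rfl (kernel_area ht.1 ht.2)).trans ?_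
        rw [ENNReal.ofReal_mul (by positivity)]
        apply le_of_eq
        ring
    _ = _ := lintegral_const_mul' _ _ ENNReal.ofReal_ne_top

/-- If `μ` is a finite positive Borel measure on `[0,1)` which is a
`1`-logarithmic `1`-Carleson measure, then there is `C > 0` such that for every `f ∈ H¹`:
the integral defining `I_μ f(z)` converges absolutely for every `z ∈ 𝔻`, the function
`I_μ f` is analytic in `𝔻`, and `‖I_μ f‖_{𝒟¹₀} ≤ C ‖f‖_{H¹}`. -/
theorem hmu_H1_to_D10 (μ : Measure ℝ) [IsFiniteMeasure μ]
    (hsupp : μ (Ico (0 : ℝ) 1)ᶜ = 0)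
    (hμ : ∃ C > 0, ∀ t ∈ Ico (0 : ℝ) 1,
      (μ (Ico t 1)).toReal * Real.log (2 / (1 - t)) ≤ C * (1 - t)) :
    ∃ C > 0, ∀ f : ℂ → ℂ, DifferentiableOn ℂ f (ball (0 : ℂ) 1) → hardyNorm f < ⊤ →
      (∀ z ∈ ball (0 : ℂ) 1, Integrable (fun t : ℝ => f (t : ℂ) / (1 - (t : ℂ) * z)) μ) ∧
      DifferentiableOn ℂ (Imu μ f) (ball (0 : ℂ) 1) ∧
      dirichletNorm 1 0 (Imu μ f) ≤ ENNReal.ofReal C * hardyNorm f := by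
  obtain ⟨C, hC, hμ⟩ := hμ
  have hl2 : 0 < Real.log 2 := Real.log_pos (by norm_num)
  have hae : ∀ᵐ t ∂μ, t ∈ Ico (0:ℝ) 1 := by
    rw [ae_iff]; exact hsupp
  refine ⟨((Real.log 2)⁻¹ + 16 / Real.log 2) * (96 * C), by positivity, ?_⟩
  intro f hf hfin
  have hE := embed_one μ hsupp hC hμ hf
  set E := ∫⁻ t, ENNReal.ofReal (Real.log (2 / (1 - t))) * ENNReal.ofReal ‖f t‖ ∂μ with hEdef
  have hN : ∫⁻ t : ℝ, ‖f t‖ₑ ∂μ ≤ ENNReal.ofReal (Real.log 2)⁻¹ * E := by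
    rw [hEdef, ← lintegral_const_mul' _ _ ENNReal.ofReal_ne_top]
    refine lintegral_mono_ae ?_
    filter_upwards [hae] with t ht
    have hL := L_nonneg ht
    rw [← ofReal_norm, ← mul_assoc, ← ENNReal.ofReal_mul (by positivity)]
    refine le_mul_of_one_le_left' ?_
    rw [ENNReal.one_le_ofReal]
    rw [inv_mul_eq_div, le_div_iff₀ hl2]
    linarith
  have hEtop : E < ⊤ := hE.trans_lt (ENNReal.mul_lt_top ENNReal.ofReal_lt_top hfin)
  have hint : Integrable (fun t : ℝ => f t) μ := by
    refine ⟨by simpa using aesm_f μ hsupp hf zero_le_one le_rfl, ?_⟩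
    exact hN.trans_lt (ENNReal.mul_lt_top ENNReal.ofReal_lt_top hEtop)
  refine ⟨fun z hz => (imu_deriv μ hsupp hint hz).1, fun z hz =>
    (imu_deriv μ hsupp hint hz).2.differentiableAt.differentiableWithinAt, ?_⟩
  have h0 : ENNReal.ofReal ‖Imu μ f 0‖ ≤ ENNReal.ofReal (Real.log 2)⁻¹ * E := by
    rw [ofReal_norm]
    refine le_trans ?_ hN
    simp only [Imu, mul_zero, sub_zero, div_one]
    exact enorm_integral_le_lintegral_enorm _
  have h1 := berg_bound μ hsupp hint
  rw [dirichletNorm, ENNReal.ofReal_mul (by positivity), ENNReal.ofReal_add (by positivity)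
    (by positivity), mul_assoc]
  refine (add_le_add h0 h1).trans ?_
  rw [← hEdef, ← add_mul]
  exact mul_le_mul' le_rfl hE
end

section
/- Let μ be a finite positive Borel measure on [0,1). Suppose there exists a constant C > 0 such that for every f in the Dirichlet-type space 𝒟^1_0, the integral I_μ f(z) = ∫_{[0,1)} f(t)/(1 - t z) dμ(t) converges absolutely for every z in the unit disc 𝔻, the resulting function I_μ f is analytic in 𝔻, belongs to 𝒟^1_0, and ‖I_μ f‖_{𝒟^1_0} ≤ C ‖f‖_{𝒟^1_0}. Then μ is a 1-logarithmic 1-Carleson measure, i.e., μ([b,1)) = O((1−b)/log(1/(1−b))) as b → 1⁻. -/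
open MeasureTheory Set Metric Filter Asymptotics
open scoped ENNReal Topology

lemma aux_upper : ∃ K : ℝ, 0 ≤ K ∧ ∀ b : ℝ, 0 ≤ b → b < 1 →
    ∫⁻ z in ball (0 : ℂ) 1, ENNReal.ofReal (1 / ‖1 - (b : ℂ) * z‖ ^ 3) ≤
      ENNReal.ofReal (K / (1 - b)) := by
  have hG : Integrable (fun u : ℂ => (1 + ‖u‖) ^ (-(3 : ℝ))) volume :=
    integrable_one_add_norm (by rw [Complex.finrank_real_complex]; norm_num)
  refine ⟨27 * ∫ u : ℂ, (1 + ‖u‖) ^ (-(3 : ℝ)), by positivity, fun b hb0 hb1 => ?_⟩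
  set δ := 1 - b with hδ
  have hδ0 : 0 < δ := by linarith
  have hI1 : Integrable (fun z : ℂ => (1 + ‖δ⁻¹ • z‖) ^ (-(3 : ℝ))) volume :=
    hG.comp_smul (inv_ne_zero hδ0.ne')
  have hI : Integrable (fun z : ℂ => 27 * (δ ^ 3)⁻¹ * (1 + ‖δ⁻¹ • (1 - z)‖) ^ (-(3 : ℝ))) volume :=
    (hI1.comp_sub_left (1 : ℂ)).const_mul _
  have hval : ∫ z : ℂ, 27 * (δ ^ 3)⁻¹ * (1 + ‖δ⁻¹ • (1 - z)‖) ^ (-(3 : ℝ)) =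
      (27 * ∫ u : ℂ, (1 + ‖u‖) ^ (-(3 : ℝ))) / δ := by
    rw [integral_const_mul,
      integral_sub_left_eq_self (fun z : ℂ => (1 + ‖δ⁻¹ • z‖) ^ (-(3 : ℝ))) volume 1,
      Measure.integral_comp_inv_smul_of_nonneg volume (fun z : ℂ => (1 + ‖z‖) ^ (-(3 : ℝ))) hδ0.le,
      Complex.finrank_real_complex, smul_eq_mul]
    field_simp
  rw [← hval, ofReal_integral_eq_lintegral_ofReal hI (ae_of_all _ fun z => by positivity)]
  refine le_trans ?_ (setLIntegral_le_lintegral (ball (0 : ℂ) 1) _)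
  refine setLIntegral_mono' measurableSet_ball fun z hz => ENNReal.ofReal_le_ofReal ?_
  have hz1 : ‖z‖ < 1 := by simpa using hz
  have h1 : δ ≤ ‖1 - (b : ℂ) * z‖ := by
    have h := norm_sub_norm_le (1 : ℂ) ((b : ℂ) * z)
    rw [norm_mul, Complex.norm_real, Real.norm_of_nonneg hb0, norm_one] at h
    nlinarith [norm_nonneg z]
  have h2 : ‖1 - z‖ ≤ ‖1 - (b : ℂ) * z‖ + δ := by
    have h := norm_add_le (1 - (b : ℂ) * z) (-((δ : ℂ) * z))
    rw [norm_neg, norm_mul, Complex.norm_real, Real.norm_of_nonneg hδ0.le] at h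
    have e : 1 - (b : ℂ) * z + -((δ : ℂ) * z) = 1 - z := by rw [hδ]; push_cast; ring
    rw [e] at h
    nlinarith [norm_nonneg z]
  have e : 27 * (δ ^ 3)⁻¹ * (1 + ‖δ⁻¹ • (1 - z)‖) ^ (-(3 : ℝ)) = 27 / (δ + ‖1 - z‖) ^ 3 := by
    rw [norm_smul, norm_inv, Real.norm_of_nonneg hδ0.le,
      Real.rpow_neg (by positivity), show (3 : ℝ) = ((3 : ℕ) : ℝ) by norm_num, Real.rpow_natCast]
    have : 0 < δ + ‖1 - z‖ := by positivity
    have e2 : 1 + δ⁻¹ * ‖1 - z‖ = (δ + ‖1 - z‖) / δ := by field_simp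
    rw [e2]
    field_simp
  rw [e, div_le_div_iff₀ (pow_pos (by linarith) 3) (by positivity)]
  have h3 : δ + ‖1 - z‖ ≤ 3 * ‖1 - (b : ℂ) * z‖ := by linarith
  have := pow_le_pow_left₀ (by positivity) h3 3
  nlinarith

/-- Region where the kernel is large. -/
def auxR (δ : ℝ) : Set ℂ :=
  {z | (3 / 4 ≤ z.re ∧ z.re ≤ 1 - δ) ∧ 1 - z.re ≤ z.im ∧ z.im ≤ 2 * (1 - z.re)}

lemma auxR_meas (δ : ℝ) : MeasurableSet (auxR δ) := by
  unfold auxR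
  have h1 := Complex.measurable_re
  have h2 := Complex.measurable_im
  refine MeasurableSet.inter (MeasurableSet.inter ?_ ?_) (MeasurableSet.inter ?_ ?_)
  · exact measurableSet_le measurable_const h1
  · exact measurableSet_le h1 measurable_const
  · exact measurableSet_le (measurable_const.sub h1) h2
  · exact measurableSet_le h2 ((measurable_const.sub h1).const_mul _)

lemma auxR_sub {δ : ℝ} (hδ : 0 < δ) : auxR δ ⊆ ball (0 : ℂ) 1 := by
  rintro z ⟨⟨h1, h2⟩, h3, h4⟩
  rw [mem_ball_zero_iff, ← sq_lt_one_iff₀ (norm_nonneg z), Complex.sq_norm, Complex.normSq_apply]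
  nlinarith

lemma aux_lower {δ : ℝ} (hδ : 0 < δ) (hδ1 : δ ≤ 1 / 4) :
    ENNReal.ofReal (Real.log (1 / (4 * δ))) ≤
      ∫⁻ z in auxR δ, ENNReal.ofReal (1 / (1 - z.re) ^ 2) := by
  have hpre : auxR δ = Complex.measurableEquivRealProd ⁻¹'
      {p : ℝ × ℝ | (3 / 4 ≤ p.1 ∧ p.1 ≤ 1 - δ) ∧ 1 - p.1 ≤ p.2 ∧ p.2 ≤ 2 * (1 - p.1)} := rfl
  have hms : MeasurableSet
      {p : ℝ × ℝ | (3 / 4 ≤ p.1 ∧ p.1 ≤ 1 - δ) ∧ 1 - p.1 ≤ p.2 ∧ p.2 ≤ 2 * (1 - p.1)} := by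
    refine MeasurableSet.inter (MeasurableSet.inter ?_ ?_) (MeasurableSet.inter ?_ ?_)
    · exact measurableSet_le measurable_const measurable_fst
    · exact measurableSet_le measurable_fst measurable_const
    · exact measurableSet_le (measurable_const.sub measurable_fst) measurable_snd
    · exact measurableSet_le measurable_snd ((measurable_const.sub measurable_fst).const_mul _)
  have hmf : Measurable (fun p : ℝ × ℝ => ENNReal.ofReal (1 / (1 - p.1) ^ 2)) := by fun_prop
  have h := Complex.volume_preserving_equiv_real_prod.setLIntegral_comp_preimage hms hmf
  rw [← hpre] at h
  change _ ≤ ∫⁻ z in auxR δ, ENNReal.ofReal (1 / (1 - (Complex.measurableEquivRealProd z).1) ^ 2)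
  rw [h, ← lintegral_indicator hms, Measure.volume_eq_prod,
    lintegral_prod _ (hmf.indicator hms).aemeasurable]
  have hint : IntervalIntegrable (fun x : ℝ => 1 / (1 - x)) volume (3 / 4) (1 - δ) := by
    refine ContinuousOn.intervalIntegrable ?_
    rw [uIcc_of_le (by linarith)]
    refine continuousOn_const.div (by fun_prop) fun x hx => ?_
    have := hx.2
    linarith
  have hval : ∫ x in (3 / 4 : ℝ)..(1 - δ), 1 / (1 - x) = Real.log (1 / (4 * δ)) := by
    rw [intervalIntegral.integral_comp_sub_left (fun x : ℝ => 1 / x) 1,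
      integral_one_div_of_pos (by linarith) (by norm_num)]
    congr 1
    rw [show 1 - (1 - δ) = δ by ring]
    field_simp
    norm_num
  rw [← hval, intervalIntegral.integral_of_le (by linarith),
    ofReal_integral_eq_lintegral_ofReal hint.1
      ((ae_restrict_iff' measurableSet_Ioc).2 (ae_of_all _ fun x hx => by
        have := hx.2
        have : 0 < 1 - x := by linarith
        simp only [Pi.zero_apply]
        positivity))]
  refine le_trans ?_ (setLIntegral_le_lintegral (Ioc (3 / 4 : ℝ) (1 - δ)) _)
  refine setLIntegral_mono' measurableSet_Ioc fun x hx => ?_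
  have hx2 := hx.2
  have hx1 := hx.1
  have hs : 0 < 1 - x := by linarith
  calc ENNReal.ofReal (1 / (1 - x))
      = ∫⁻ y in Icc (1 - x) (2 * (1 - x)), ENNReal.ofReal (1 / (1 - x) ^ 2) := by
        rw [setLIntegral_const, Real.volume_Icc, ← ENNReal.ofReal_mul (by positivity)]
        congr 1
        field_simp
        ring
    _ = ∫⁻ y, (Icc (1 - x) (2 * (1 - x))).indicator
          (fun _ => ENNReal.ofReal (1 / (1 - x) ^ 2)) y := by
        rw [lintegral_indicator measurableSet_Icc]
    _ ≤ _ := by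
        refine lintegral_mono fun y => ?_
        by_cases hy : y ∈ Icc (1 - x) (2 * (1 - x))
        · rw [indicator_of_mem hy, indicator_of_mem]
          exact ⟨⟨hx1.le, hx2⟩, hy.1, hy.2⟩
        · rw [indicator_of_notMem hy]
          exact zero_le

lemma aux_im (a : ℝ) (w : ℂ) :
    ((a : ℂ) / w ^ 2).im = a * (2 * w.re * (-w.im)) / (Complex.normSq w) ^ 2 := by
  rw [Complex.div_im]
  simp [pow_two]
  ring

lemma aux_den {t : ℝ} (ht0 : 0 ≤ t) (ht1 : t < 1) (z : ℂ) : 1 - ‖z‖ ≤ ‖1 - (t : ℂ) * z‖ := by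
  have h := norm_sub_norm_le (1 : ℂ) ((t : ℂ) * z)
  rw [norm_mul, Complex.norm_real, Real.norm_of_nonneg ht0, norm_one] at h
  nlinarith [norm_nonneg z]

/-- the real test function -/
noncomputable def auxg (b t : ℝ) : ℝ := (1 - b) / (1 - b * t) ^ 2

lemma auxg_nonneg {b : ℝ} (hb1 : b < 1) (t : ℝ) : 0 ≤ auxg b t := by
  unfold auxg
  have : 0 < 1 - b := by linarith
  positivity

lemma auxg_le {b t : ℝ} (hb0 : 0 ≤ b) (hb1 : b < 1) (ht1 : t < 1) : auxg b t ≤ 1 / (1 - b) := by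
  unfold auxg
  have h0 : 0 < 1 - b := by linarith
  have h : 1 - b ≤ 1 - b * t := by nlinarith
  have h1 : 0 < 1 - b * t := by linarith
  rw [div_le_div_iff₀ (by positivity) h0]
  nlinarith

lemma auxg_ge {b t : ℝ} (hb0 : 0 ≤ b) (hb1 : b < 1) (hbt : b ≤ t) (ht1 : t < 1) :
    1 / (4 * (1 - b)) ≤ auxg b t := by
  unfold auxg
  have h0 : 0 < 1 - b := by linarith
  have h : 1 - b * t ≤ 2 * (1 - b) := by nlinarith
  have h1 : 0 < 1 - b * t := by nlinarith
  rw [div_le_div_iff₀ (by positivity) (by positivity)]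
  nlinarith

lemma aux_deriv (μ : Measure ℝ) [IsFiniteMeasure μ] (hsupp : μ (Ico (0 : ℝ) 1)ᶜ = 0)
    {b : ℝ} (hb0 : 0 ≤ b) (hb1 : b < 1) {z : ℂ} (hz : ‖z‖ < 1) :
    Integrable (fun t : ℝ => ((t * auxg b t : ℝ) : ℂ) / (1 - (t : ℂ) * z) ^ 2) μ ∧
    HasDerivAt (fun z : ℂ => ∫ t : ℝ, ((auxg b t : ℝ) : ℂ) / (1 - (t : ℂ) * z) ∂μ)
      (∫ t : ℝ, ((t * auxg b t : ℝ) : ℂ) / (1 - (t : ℂ) * z) ^ 2 ∂μ) z := by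
  have hae : ∀ᵐ t ∂μ, t ∈ Ico (0 : ℝ) 1 := by rw [ae_iff]; exact hsupp
  have hgm : Measurable (auxg b) := by unfold auxg; fun_prop
  set ε := (1 - ‖z‖) / 2 with hε
  have hε0 : 0 < ε := by linarith
  have hb : 0 < 1 - b := by linarith
  have hball : ∀ x ∈ ball z ε, ε ≤ 1 - ‖x‖ := by
    intro x hx
    have h1 : ‖x - z‖ < ε := by simpa [dist_eq_norm] using hx
    have h2 := norm_sub_norm_le x z
    linarith
  refine hasDerivAt_integral_of_dominated_loc_of_deriv_le (s := ball z ε)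
    (F := fun z t => ((auxg b t : ℝ) : ℂ) / (1 - (t : ℂ) * z))
    (F' := fun z t => ((t * auxg b t : ℝ) : ℂ) / (1 - (t : ℂ) * z) ^ 2)
    (bound := fun _ => 1 / (1 - b) / ε ^ 2) (ball_mem_nhds z hε0) ?_ ?_ ?_ ?_ ?_ ?_
  · refine Eventually.of_forall fun x => Measurable.aestronglyMeasurable ?_
    fun_prop
  · refine Integrable.of_bound (C := 1 / (1 - b) / ε) (Measurable.aestronglyMeasurable (by fun_prop)) ?_
    filter_upwards [hae] with t ht
    have h1 := aux_den ht.1 ht.2 z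
    rw [norm_div, Complex.norm_real, Real.norm_of_nonneg (auxg_nonneg hb1 t)]
    exact div_le_div₀ (by positivity) (auxg_le hb0 hb1 ht.2) hε0 (by linarith)
  · exact Measurable.aestronglyMeasurable (by fun_prop)
  · filter_upwards [hae] with t ht x hx
    have h1 := aux_den ht.1 ht.2 x
    have h2 := hball x hx
    have h3 := auxg_le hb0 hb1 ht.2
    have h4 := auxg_nonneg hb1 t
    rw [norm_div, norm_pow, Complex.norm_real, Real.norm_of_nonneg (mul_nonneg ht.1 h4)]
    refine div_le_div₀ (by positivity) ?_ (by positivity) ?_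
    · nlinarith [ht.1, ht.2]
    · exact pow_le_pow_left₀ hε0.le (by linarith) 2
  · exact integrable_const _
  · filter_upwards [hae] with t ht x hx
    have h1 := aux_den ht.1 ht.2 x
    have h2 := hball x hx
    have h3 : 1 - (t : ℂ) * x ≠ 0 := norm_pos_iff.1 (by linarith)
    have hd : HasDerivAt (fun x : ℂ => 1 - (t : ℂ) * x) (-(t : ℂ)) x := by
      simpa using ((hasDerivAt_id x).const_mul (t : ℂ)).const_sub 1
    refine ((hasDerivAt_const x ((auxg b t : ℝ) : ℂ)).div hd h3).congr_deriv ?_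
    push_cast
    ring

lemma aux_ptwise (μ : Measure ℝ) [IsFiniteMeasure μ] (hsupp : μ (Ico (0 : ℝ) 1)ᶜ = 0)
    {b : ℝ} (hb0 : 15 / 16 ≤ b) (hb1 : b < 1) {z : ℂ} (hz : z ∈ auxR (1 - b)) :
    (μ (Ico b 1)).toReal / (256 * (1 - b)) * (1 / (1 - z.re) ^ 2) ≤
      ‖∫ t : ℝ, ((t * auxg b t : ℝ) : ℂ) / (1 - (t : ℂ) * z) ^ 2 ∂μ‖ := by
  have hae : ∀ᵐ t ∂μ, t ∈ Ico (0 : ℝ) 1 := by rw [ae_iff]; exact hsupp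
  have hδ : 0 < 1 - b := by linarith
  have hz1 : ‖z‖ < 1 := by simpa using auxR_sub hδ hz
  have hI := (aux_deriv μ hsupp (by linarith) hb1 hz1).1
  obtain ⟨⟨hr1, hr2⟩, hi1, hi2⟩ := hz
  set s := 1 - z.re with hs
  have hre : z.re = 1 - s := by rw [hs]; ring
  have hs0 : 0 < s := by linarith
  refine le_trans ?_ (Complex.im_le_norm _)
  have him : (∫ t : ℝ, ((t * auxg b t : ℝ) : ℂ) / (1 - (t : ℂ) * z) ^ 2 ∂μ).im =
      ∫ t : ℝ, (((t * auxg b t : ℝ) : ℂ) / (1 - (t : ℂ) * z) ^ 2).im ∂μ :=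
    (integral_im hI).symm
  have hIm : Integrable (fun t : ℝ => (((t * auxg b t : ℝ) : ℂ) / (1 - (t : ℂ) * z) ^ 2).im) μ :=
    hI.im
  have hform : ∀ t : ℝ, (((t * auxg b t : ℝ) : ℂ) / (1 - (t : ℂ) * z) ^ 2).im =
      t * auxg b t * (2 * (1 - t * (1 - s)) * (t * z.im)) /
        ((1 - t * (1 - s)) ^ 2 + (t * z.im) ^ 2) ^ 2 := by
    intro t
    rw [aux_im, Complex.normSq_apply]
    simp [hre]
    ring
  rw [him]
  refine le_trans (b := ∫ t in Ico b 1, (((t * auxg b t : ℝ) : ℂ) / (1 - (t : ℂ) * z) ^ 2).im ∂μ) ?_ ?_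
  · have hc : (μ (Ico b 1)).toReal / (256 * (1 - b)) * (1 / s ^ 2) =
        ∫ _t in Ico b 1, 1 / (256 * (1 - b)) * (1 / s ^ 2) ∂μ := by
      rw [setIntegral_const, smul_eq_mul]
      simp only [Measure.real]
      ring
    rw [hc]
    refine setIntegral_mono_on (integrable_const _).integrableOn hIm.integrableOn
      measurableSet_Ico fun t ht => ?_
    rw [hform]
    have ht1 := ht.1
    have ht2 := ht.2
    have hg := auxg_ge (by linarith) hb1 ht.1 ht.2
    have hu1 : s ≤ 1 - t * (1 - s) := by nlinarith
    have hu2 : 1 - t * (1 - s) ≤ 2 * s := by nlinarith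
    have hv1 : 15 / 16 * s ≤ t * z.im := by nlinarith
    have hv2 : t * z.im ≤ 2 * s := by nlinarith
    set u := 1 - t * (1 - s)
    set v := t * z.im
    have hu0 : 0 < u := by linarith
    have hv0 : 0 < v := by nlinarith
    have hden : (u ^ 2 + v ^ 2) ^ 2 ≤ 64 * s ^ 4 := by
      have h1 : u ^ 2 + v ^ 2 ≤ 8 * s ^ 2 := by nlinarith
      have := pow_le_pow_left₀ (by positivity) h1 2
      nlinarith
    have hg1 : 15 / 16 * (1 / (4 * (1 - b))) ≤ t * auxg b t :=
      mul_le_mul (by linarith) hg (by positivity) (by linarith)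
    have huv : s * (15 / 16 * s) ≤ u * v := mul_le_mul hu1 hv1 (by positivity) hu0.le
    have hnum : 15 / 16 * (1 / (4 * (1 - b))) * (2 * s * (15 / 16 * s)) ≤
        t * auxg b t * (2 * u * v) :=
      mul_le_mul hg1 (by nlinarith) (by positivity) (le_trans (by positivity) hg1)
    refine le_trans ?_ (div_le_div₀ (le_trans (by positivity) hnum) hnum (by positivity) hden)
    rw [show 15 / 16 * (1 / (4 * (1 - b))) * (2 * s * (15 / 16 * s)) / (64 * s ^ 4) =
      (225 / 128) * (1 / (256 * (1 - b)) * (1 / s ^ 2)) by field_simp; norm_num]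
    have : 0 < 1 / (256 * (1 - b)) * (1 / s ^ 2) := by positivity
    linarith
  · refine setIntegral_le_integral hIm ?_
    filter_upwards [hae] with t ht
    rw [hform]
    have h1 := auxg_nonneg hb1 t
    have h2 := ht.1
    have h3 : 0 ≤ 1 - t * (1 - s) := by nlinarith [ht.2]
    have h4 : 0 ≤ z.im := by linarith
    simp only [Pi.zero_apply]
    positivity

lemma aux_bergman (g : ℂ → ℂ) : bergmanNorm 1 0 g =
    (ENNReal.ofReal Real.pi)⁻¹ * ∫⁻ z in ball (0 : ℂ) 1, ENNReal.ofReal ‖g z‖ := by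
  simp [bergmanNorm, dA, Measure.restrict_smul, lintegral_smul_measure]

/-- the test function -/
noncomputable def auxf (b : ℝ) (z : ℂ) : ℂ := ((1 - b : ℝ) : ℂ) / (1 - (b : ℂ) * z) ^ 2

lemma auxf_real (b t : ℝ) : auxf b (t : ℂ) = ((auxg b t : ℝ) : ℂ) := by
  simp [auxf, auxg]

lemma auxf_deriv {b : ℝ} (hb0 : 0 ≤ b) (hb1 : b < 1) {z : ℂ} (hz : ‖z‖ < 1) :
    HasDerivAt (auxf b) (2 * b * ((1 - b : ℝ) : ℂ) / (1 - (b : ℂ) * z) ^ 3) z := by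
  have h1 := aux_den hb0 hb1 z
  have h3 : 1 - (b : ℂ) * z ≠ 0 := norm_pos_iff.1 (by linarith)
  have hd : HasDerivAt (fun x : ℂ => 1 - (b : ℂ) * x) (-(b : ℂ)) z := by
    simpa using ((hasDerivAt_id z).const_mul (b : ℂ)).const_sub 1
  refine ((hasDerivAt_const z ((1 - b : ℝ) : ℂ)).div (hd.pow 2) (pow_ne_zero 2 h3)).congr_deriv ?_
  simp only [Pi.pow_apply]
  field_simp
  push_cast
  ring

lemma aux_norm : ∃ M : ℝ, 0 ≤ M ∧ ∀ b : ℝ, 0 ≤ b → b < 1 →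
    dirichletNorm 1 0 (auxf b) ≤ ENNReal.ofReal M := by
  obtain ⟨K, hK, h⟩ := aux_upper
  refine ⟨1 + Real.pi⁻¹ * (2 * K), by positivity, fun b hb0 hb1 => ?_⟩
  have hb : 0 < 1 - b := by linarith
  rw [dirichletNorm, ENNReal.ofReal_add (by norm_num) (by positivity)]
  refine add_le_add (ENNReal.ofReal_le_ofReal ?_) ?_
  · simp only [auxf, mul_zero, sub_zero, one_pow, div_one]
    rw [Complex.norm_real, Real.norm_of_nonneg hb.le]
    linarith
  · rw [aux_bergman, ENNReal.ofReal_mul (by positivity), ENNReal.ofReal_inv_of_pos Real.pi_pos]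
    gcongr
    calc ∫⁻ z in ball (0 : ℂ) 1, ENNReal.ofReal ‖deriv (auxf b) z‖
        ≤ ∫⁻ z in ball (0 : ℂ) 1, ENNReal.ofReal (2 * (1 - b)) *
            ENNReal.ofReal (1 / ‖1 - (b : ℂ) * z‖ ^ 3) := by
          refine setLIntegral_mono' measurableSet_ball fun z hz => ?_
          have hz1 : ‖z‖ < 1 := by simpa using hz
          rw [(auxf_deriv hb0 hb1 hz1).deriv, ← ENNReal.ofReal_mul (by positivity)]
          refine ENNReal.ofReal_le_ofReal ?_
          rw [norm_div, norm_mul, norm_mul, Complex.norm_real, Complex.norm_real, norm_pow,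
            Real.norm_of_nonneg hb.le, Real.norm_of_nonneg hb0, Complex.norm_two,
            mul_one_div]
          gcongr
          nlinarith
      _ = ENNReal.ofReal (2 * (1 - b)) *
            ∫⁻ z in ball (0 : ℂ) 1, ENNReal.ofReal (1 / ‖1 - (b : ℂ) * z‖ ^ 3) :=
          lintegral_const_mul' _ _ ENNReal.ofReal_ne_top
      _ ≤ ENNReal.ofReal (2 * (1 - b)) * ENNReal.ofReal (K / (1 - b)) := by
          gcongr
          exact h b hb0 hb1
      _ = ENNReal.ofReal (2 * K) := by
          rw [← ENNReal.ofReal_mul (by positivity)]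
          congr 1
          field_simp

/-- If the operator `I_μ` is well defined and bounded from `𝒟¹₀` into
itself, then `μ` is a `1`-logarithmic `1`-Carleson measure, i.e.
`μ([b,1)) = O((1-b)/log(1/(1-b)))` as `b → 1⁻`. -/
theorem bounded_D10_implies_logCarleson (μ : Measure ℝ) [IsFiniteMeasure μ]
    (hsupp : μ (Ico (0 : ℝ) 1)ᶜ = 0)
    (hbdd : ∃ C > 0, ∀ f : ℂ → ℂ, DifferentiableOn ℂ f (ball (0 : ℂ) 1) →
      dirichletNorm 1 0 f < ⊤ →
      (∀ z ∈ ball (0 : ℂ) 1, Integrable (fun t : ℝ => f (t : ℂ) / (1 - (t : ℂ) * z)) μ) ∧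
      DifferentiableOn ℂ (Imu μ f) (ball (0 : ℂ) 1) ∧
      dirichletNorm 1 0 (Imu μ f) ≤ ENNReal.ofReal C * dirichletNorm 1 0 f) :
    (fun b : ℝ => (μ (Ico b 1)).toReal) =O[𝓝[<] (1 : ℝ)]
      (fun b : ℝ => (1 - b) / Real.log (1 / (1 - b))) := by
  obtain ⟨C, hC, hbdd⟩ := hbdd
  obtain ⟨M, hM, hnorm⟩ := aux_norm
  refine IsBigO.of_bound (2 * (256 * Real.pi * (C * M))) ?_
  filter_upwards [Ico_mem_nhdsLT (show (15 / 16 : ℝ) < 1 by norm_num)] with b hb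
  have hb0 : 15 / 16 ≤ b := hb.1
  have hb1 : b < 1 := hb.2
  have hδ : 0 < 1 - b := by linarith
  have hn := hnorm b (by linarith) hb1
  obtain ⟨-, -, hle⟩ := hbdd (auxf b)
    (fun z hz => (auxf_deriv (by linarith) hb1 (by simpa using hz)).differentiableAt.differentiableWithinAt)
    (lt_of_le_of_lt hn ENNReal.ofReal_lt_top)
  set m := (μ (Ico b 1)).toReal with hm
  have hm0 : 0 ≤ m := ENNReal.toReal_nonneg
  have hImu : Imu μ (auxf b) = fun z : ℂ => ∫ t : ℝ, ((auxg b t : ℝ) : ℂ) / (1 - (t : ℂ) * z) ∂μ := by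
    funext z
    simp only [Imu, auxf_real]
  set A := m / (256 * (1 - b)) with hA
  have hA0 : 0 ≤ A := by positivity
  have hlow : ENNReal.ofReal (Real.pi⁻¹ * (A * Real.log (1 / (4 * (1 - b))))) ≤
      ENNReal.ofReal (C * M) := by
    calc ENNReal.ofReal (Real.pi⁻¹ * (A * Real.log (1 / (4 * (1 - b)))))
        = (ENNReal.ofReal Real.pi)⁻¹ * (ENNReal.ofReal A *
            ENNReal.ofReal (Real.log (1 / (4 * (1 - b))))) := by
          rw [ENNReal.ofReal_mul (by positivity), ENNReal.ofReal_mul hA0,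
            ENNReal.ofReal_inv_of_pos Real.pi_pos]
      _ ≤ (ENNReal.ofReal Real.pi)⁻¹ * (ENNReal.ofReal A *
            ∫⁻ z in auxR (1 - b), ENNReal.ofReal (1 / (1 - z.re) ^ 2)) := by
          gcongr
          exact aux_lower hδ (by linarith)
      _ = (ENNReal.ofReal Real.pi)⁻¹ *
            ∫⁻ z in auxR (1 - b), ENNReal.ofReal A * ENNReal.ofReal (1 / (1 - z.re) ^ 2) := by
          rw [lintegral_const_mul' _ _ ENNReal.ofReal_ne_top]
      _ ≤ (ENNReal.ofReal Real.pi)⁻¹ *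
            ∫⁻ z in auxR (1 - b), ENNReal.ofReal ‖deriv (Imu μ (auxf b)) z‖ := by
          refine mul_le_mul_right (setLIntegral_mono' (auxR_meas _) fun z hz => ?_) _
          have hz1 : ‖z‖ < 1 := by simpa using auxR_sub hδ hz
          rw [← ENNReal.ofReal_mul hA0, hImu,
            (aux_deriv μ hsupp (by linarith) hb1 hz1).2.deriv]
          exact ENNReal.ofReal_le_ofReal (aux_ptwise μ hsupp hb0 hb1 hz)
      _ ≤ bergmanNorm 1 0 (deriv (Imu μ (auxf b))) := by
          rw [aux_bergman]
          gcongr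
          exact auxR_sub hδ
      _ ≤ dirichletNorm 1 0 (Imu μ (auxf b)) := le_add_self
      _ ≤ ENNReal.ofReal C * dirichletNorm 1 0 (auxf b) := hle
      _ ≤ ENNReal.ofReal C * ENNReal.ofReal M := by gcongr
      _ = ENNReal.ofReal (C * M) := (ENNReal.ofReal_mul hC.le).symm
  have hlow' := (ENNReal.ofReal_le_ofReal_iff (by positivity)).1 hlow
  have hL : Real.log (1 / (1 - b)) ≤ 2 * Real.log (1 / (4 * (1 - b))) := by
    rw [show 2 * Real.log (1 / (4 * (1 - b))) = Real.log ((1 / (4 * (1 - b))) ^ 2) by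
      rw [Real.log_pow]; norm_num]
    refine Real.log_le_log (by positivity) ?_
    rw [div_pow, div_le_div_iff₀ hδ (by positivity)]
    nlinarith
  have hL0 : 0 < Real.log (1 / (1 - b)) :=
    Real.log_pos (by rw [lt_div_iff₀ hδ]; linarith)
  rw [Real.norm_of_nonneg hm0, Real.norm_of_nonneg (by positivity), ← mul_div_assoc,
    le_div_iff₀ hL0]
  have h1 : A * Real.log (1 / (4 * (1 - b))) ≤ Real.pi * (C * M) := by
    rwa [inv_mul_le_iff₀ Real.pi_pos] at hlow'
  have h2 : m = 256 * (1 - b) * A := by rw [hA]; field_simp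
  rw [h2]
  have h3 : A * Real.log (1 / (1 - b)) ≤ 2 * (Real.pi * (C * M)) := by nlinarith
  nlinarith
end

section
/- Let 0 < α < 1 and let μ be a finite positive Borel measure on [0,1) which is an α-logarithmic 1-Carleson measure. Then there exists a constant C > 0 such that for every f in the Hardy space H^1, the function I_μ f(z) = ∫_{[0,1)} f(t)/(1 - t z) dμ(t) is a well-defined analytic function in the unit disc 𝔻 and satisfies ∫_𝔻 |(I_μ f)′(z)| (log(2/(1−|z|)))^{α−1} dA(z) ≤ C ‖f‖_{H^1}; in particular I_μ f belongs to the space 𝒟^1(log^{α−1}). -/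
open MeasureTheory Set Metric Filter Asymptotics
open scoped ENNReal

namespace HmuAux

/-- holomorphic square root of `1 - b z`. -/
lemma exists_sqrt_linear (b : ℂ) (hb : ‖b‖ ≤ 1) :
    ∃ S : ℂ → ℂ, DiffContOnCl ℂ S (ball 0 1) ∧ ∀ z, S z ^ 2 = 1 - b * z := by
  refine ⟨fun z => (1 - b * z) ^ (1 / 2 : ℂ), ?_, ?_⟩
  · have hre : ∀ z : ℂ, (b * z).re ≤ ‖z‖ := fun z =>
      (Complex.re_le_norm _).trans (by rw [norm_mul]; nlinarith [norm_nonneg z])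
    constructor
    · intro z hz
      have hz' : ‖z‖ < 1 := by simpa using hz
      have h1 : (1 - b * z) ∈ Complex.slitPlane := by
        left
        have := hre z
        simp only [Complex.sub_re, Complex.one_re]
        linarith
      exact (DifferentiableAt.cpow (f := fun z : ℂ => 1 - b * z) (by fun_prop) (by fun_prop) h1).differentiableWithinAt
    · rw [closure_ball _ one_ne_zero]
      intro z hz
      have hz' : ‖z‖ ≤ 1 := by simpa using hz
      have h1 : ContinuousAt (fun x : ℂ => x ^ (1 / 2 : ℂ)) (1 - b * z) := by
        apply Complex.continuousAt_cpow_const_of_re_pos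
        · left
          have := hre z
          simp only [Complex.sub_re, Complex.one_re]
          linarith
        · norm_num
      have h2 : ContinuousAt (fun z : ℂ => 1 - b * z) z := by fun_prop
      exact (ContinuousAt.comp (f := fun z : ℂ => 1 - b * z) h1 h2).continuousWithinAt
  · intro z
    dsimp only
    rw [show (1 / 2 : ℂ) = ((2 : ℕ) : ℂ)⁻¹ by norm_num]
    exact Complex.cpow_nat_inv_pow _ two_ne_zero

def HasRoot (f : ℂ → ℂ) : Prop :=
  ∃ G : ℂ → ℂ, DiffContOnCl ℂ G (ball 0 1) ∧ (∀ z ∈ closedBall (0 : ℂ) 1, ‖f z‖ ≤ ‖G z‖ ^ 2) ∧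
    ∀ z ∈ sphere (0 : ℂ) 1, ‖f z‖ = ‖G z‖ ^ 2

lemma HasRoot.mul {f g : ℂ → ℂ} (hf : HasRoot f) (hg : HasRoot g) :
    HasRoot (fun z => f z * g z) := by
  obtain ⟨F, h1, h2, h3⟩ := hf
  obtain ⟨G, k1, k2, k3⟩ := hg
  refine ⟨fun z => F z * G z, ?_, ?_, ?_⟩
  · exact h1.smul k1
  · intro z hz
    rw [norm_mul, norm_mul, mul_pow]
    exact mul_le_mul (h2 z hz) (k2 z hz) (norm_nonneg _) (by positivity)
  · intro z hz
    rw [norm_mul, norm_mul, mul_pow, h3 z hz, k3 z hz]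

lemma hasRoot_const (c : ℂ) : HasRoot (fun _ => c) := by
  refine ⟨fun _ => (Real.sqrt ‖c‖ : ℂ), diffContOnCl_const, ?_, ?_⟩ <;>
  · intro z _
    simp [Real.sq_sqrt]

lemma hasRoot_linear (a : ℂ) : HasRoot (fun z => z - a) := by
  rcases le_or_gt ‖a‖ 1 with ha | ha
  · obtain ⟨S, h1, h2⟩ := exists_sqrt_linear (starRingEnd ℂ a) (by simpa using ha)
    have key : ∀ z : ℂ, ‖S z‖ ^ 2 = ‖1 - starRingEnd ℂ a * z‖ := fun z => by
      rw [← norm_pow, h2]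
    have key2 : ∀ z : ℂ, ‖1 - starRingEnd ℂ a * z‖ ^ 2 - ‖z - a‖ ^ 2
        = (1 - ‖a‖ ^ 2) * (1 - ‖z‖ ^ 2) := by
      intro z
      simp only [← Complex.normSq_eq_norm_sq, Complex.normSq_apply]
      simp
      ring
    refine ⟨S, h1, ?_, ?_⟩
    · intro z hz
      have hz' : ‖z‖ ≤ 1 := by simpa using hz
      rw [key]
      have := key2 z
      have h : 0 ≤ (1 - ‖a‖ ^ 2) * (1 - ‖z‖ ^ 2) :=
        mul_nonneg (by nlinarith [norm_nonneg a]) (by nlinarith [norm_nonneg z])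
      exact (sq_le_sq₀ (norm_nonneg _) (norm_nonneg _)).1 (by linarith)
    · intro z hz
      have hz' : ‖z‖ = 1 := by simpa using hz
      rw [key]
      have := key2 z
      rw [hz'] at this
      exact (sq_eq_sq₀ (norm_nonneg _) (norm_nonneg _)).1 (by linarith)
  · have ha0 : a ≠ 0 := by rintro rfl; simp at ha; linarith
    have h : HasRoot (fun z => 1 - a⁻¹ * z) := by
      obtain ⟨S, h1, h2⟩ := exists_sqrt_linear a⁻¹ (by
        rw [norm_inv]; exact inv_le_one_of_one_le₀ ha.le)
      refine ⟨S, h1, ?_, ?_⟩ <;>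
      · intro z _
        rw [← norm_pow, h2]
    have := (hasRoot_const (-a)).mul h
    convert this using 2 with z
    field_simp
    ring

lemma hasRoot_poly (p : Polynomial ℂ) : HasRoot (fun z => p.eval z) := by
  have hp := (IsAlgClosed.splits p).eq_prod_roots
  have h : ∀ s : Multiset ℂ, HasRoot (fun z =>
      ((Multiset.map (fun x => Polynomial.X - Polynomial.C x) s).prod).eval z) := by
    intro s
    induction s using Multiset.induction with
    | empty => simpa using hasRoot_const 1
    | cons a s ih =>
      simp only [Multiset.map_cons, Multiset.prod_cons, Polynomial.eval_mul, Polynomial.eval_sub,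
        Polynomial.eval_X, Polynomial.eval_C]
      exact (hasRoot_linear a).mul ih
  rw [hp]
  simp only [Polynomial.eval_mul, Polynomial.eval_C]
  exact (hasRoot_const _).mul (h _)

/-- the majorizing kernel -/
noncomputable def ker (x θ : ℝ) : ℝ := 2 * (1 / (x + θ) + 1 / (x + (2 * Real.pi - θ)))

lemma norm_sub_lower (t θ : ℝ) (ht : t ∈ Ico (0 : ℝ) 1) (hθ : θ ∈ Ioc (0 : ℝ) (2 * Real.pi)) :
    (1 - t) + min θ (2 * Real.pi - θ) ≤ 2 * Real.pi * ‖Complex.exp (θ * Complex.I) - t‖ := by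
  have hpi := Real.pi_gt_three
  have hn : ‖Complex.exp (θ * Complex.I)‖ = 1 := Complex.norm_exp_ofReal_mul_I θ
  have ht' : ‖(t : ℂ)‖ = t := by simp [abs_of_nonneg ht.1]
  have h1 : 1 - t ≤ ‖Complex.exp (θ * Complex.I) - t‖ := by
    have := norm_sub_norm_le (Complex.exp (θ * Complex.I)) t
    rw [hn, ht'] at this
    exact this
  have h2 : ‖Complex.exp (θ * Complex.I) - 1‖ ≤ ‖Complex.exp (θ * Complex.I) - t‖ + (1 - t) := by
    have := norm_add_le (Complex.exp (θ * Complex.I) - t) ((t : ℂ) - 1)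
    have h3 : ‖(t : ℂ) - 1‖ = 1 - t := by
      rw [← Complex.ofReal_one, ← Complex.ofReal_sub, Complex.norm_real, Real.norm_eq_abs,
        abs_of_nonpos (by linarith [ht.2])]
      ring
    rw [h3] at this
    simpa using this
  have h4 : 2 * Real.sin (θ / 2) ≤ ‖Complex.exp (θ * Complex.I) - 1‖ := by
    rw [mul_comm (θ : ℂ), Complex.norm_exp_I_mul_ofReal_sub_one]
    exact le_abs_self _
  have h5 : 2 / Real.pi * (min θ (2 * Real.pi - θ) / 2) ≤ Real.sin (θ / 2) := by
    rcases le_total θ (2 * Real.pi - θ) with h | h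
    · rw [min_eq_left h]
      exact Real.mul_le_sin (by linarith [hθ.1]) (by linarith)
    · rw [min_eq_right h, ← Real.sin_pi_sub, show Real.pi - θ / 2 = (2 * Real.pi - θ) / 2 by ring]
      exact Real.mul_le_sin (by linarith [hθ.2]) (by linarith)
  have h6 : 2 * (min θ (2 * Real.pi - θ)) ≤ Real.pi * (2 * Real.sin (θ / 2)) := by
    have := mul_le_mul_of_nonneg_left h5 (by linarith : 0 ≤ 2 * Real.pi)
    have e : 2 * Real.pi * (2 / Real.pi * (min θ (2 * Real.pi - θ) / 2))
      = 2 * (min θ (2 * Real.pi - θ)) := by field_simp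
    linarith
  have h7 : Real.pi * (2 * Real.sin (θ / 2)) ≤
      Real.pi * (2 * ‖Complex.exp (θ * Complex.I) - t‖) :=
    mul_le_mul_of_nonneg_left (by linarith) (by linarith)
  nlinarith [norm_nonneg (Complex.exp (θ * Complex.I) - t)]

lemma poisson_le_ker (t θ : ℝ) (ht : t ∈ Ico (0 : ℝ) 1) (hθ : θ ∈ Ioc (0 : ℝ) (2 * Real.pi)) :
    (2 * Real.pi)⁻¹ * ((1 - t ^ 2) / ‖Complex.exp (θ * Complex.I) - t‖ ^ 2) ≤ ker (1 - t) θ := by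
  have hpi := Real.pi_gt_three
  have hx : 0 < 1 - t := by linarith [ht.2]
  have hlow := norm_sub_lower t θ ht hθ
  have hn : ‖Complex.exp (θ * Complex.I)‖ = 1 := Complex.norm_exp_ofReal_mul_I θ
  have ht' : ‖(t : ℂ)‖ = t := by simp [abs_of_nonneg ht.1]
  have h1 : 1 - t ≤ ‖Complex.exp (θ * Complex.I) - t‖ := by
    have := norm_sub_norm_le (Complex.exp (θ * Complex.I)) t
    rw [hn, ht'] at this
    exact this
  set d := ‖Complex.exp (θ * Complex.I) - t‖
  have hd : 0 < d := by linarith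
  have hm : 0 ≤ min θ (2 * Real.pi - θ) := le_min hθ.1.le (by linarith [hθ.2])
  have hA : (1 - t ^ 2) / d ^ 2 ≤ 2 / d := by
    rw [div_le_div_iff₀ (by positivity) hd]
    nlinarith [ht.1, mul_le_mul_of_nonneg_right h1 hd.le, mul_nonneg ht.1 hd.le]
  have hB : (2 * Real.pi)⁻¹ * (2 / d) ≤ 2 * (1 / ((1 - t) + min θ (2 * Real.pi - θ))) := by
    rw [show (2 * Real.pi)⁻¹ * (2 / d) = 2 * (1 / (2 * Real.pi * d)) by field_simp]
    gcongr
  have hC : 1 / ((1 - t) + min θ (2 * Real.pi - θ)) ≤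
      1 / ((1 - t) + θ) + 1 / ((1 - t) + (2 * Real.pi - θ)) := by
    have e1 : 0 ≤ 1 / ((1 - t) + θ) := by have := hθ.1; positivity
    have e2 : 0 ≤ 1 / ((1 - t) + (2 * Real.pi - θ)) := by
      have : 0 ≤ 2 * Real.pi - θ := by linarith [hθ.2]
      positivity
    rcases min_choice θ (2 * Real.pi - θ) with h | h <;> rw [h] <;> linarith
  calc _ ≤ (2 * Real.pi)⁻¹ * (2 / d) := by gcongr
    _ ≤ _ := hB
    _ ≤ ker (1 - t) θ := by unfold ker; linarith

lemma poly_bound (p : Polynomial ℂ) (t : ℝ) (ht : t ∈ Ico (0 : ℝ) 1) :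
    ENNReal.ofReal (Real.sqrt ‖p.eval (t : ℂ)‖) ≤
      ∫⁻ θ in Ioc (0 : ℝ) (2 * Real.pi),
        ENNReal.ofReal (Real.sqrt ‖p.eval (Complex.exp (θ * Complex.I))‖ * ker (1 - t) θ) := by
  obtain ⟨G, h1, h2, h3⟩ := hasRoot_poly p
  have ht' : ‖(t : ℂ)‖ = t := by simp [abs_of_nonneg ht.1]
  have hmem : (t : ℂ) ∈ ball (0 : ℂ) 1 := by rw [mem_ball_zero_iff, ht']; exact ht.2
  have hP := h1.circleAverage_poissonKernel_smul' hmem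
  rw [Real.circleAverage_def] at hP
  have hs : Real.sqrt ‖p.eval (t : ℂ)‖ ≤ ‖G t‖ := by
    rw [Real.sqrt_le_left (norm_nonneg _)]
    exact h2 _ (ball_subset_closedBall hmem)
  have hpi := Real.pi_pos
  calc ENNReal.ofReal (Real.sqrt ‖p.eval (t : ℂ)‖) ≤ ENNReal.ofReal ‖G t‖ :=
        ENNReal.ofReal_le_ofReal hs
    _ = ‖G t‖ₑ := ofReal_norm _
    _ ≤ _ := by
      rw [← hP, intervalIntegral.integral_of_le (by positivity), ← integral_smul]
      refine (enorm_integral_le_lintegral_enorm _).trans ?_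
      refine setLIntegral_mono' measurableSet_Ioc fun θ hθ => ?_
      rw [← ofReal_norm]
      apply ENNReal.ofReal_le_ofReal
      have hc : circleMap 0 1 θ = Complex.exp (θ * Complex.I) := by simp [circleMap]
      have hn : ‖Complex.exp (θ * Complex.I)‖ = 1 := Complex.norm_exp_ofReal_mul_I θ
      rw [hc]
      simp only [sub_zero, hn, ht', one_pow]
      rw [h3 _ (by simp), Real.sqrt_sq (norm_nonneg _), norm_smul, norm_smul,
        Real.norm_eq_abs, Real.norm_eq_abs, abs_of_nonneg (by positivity),
        abs_of_nonneg (div_nonneg (by nlinarith [ht.1, ht.2]) (by positivity)), ← mul_assoc, mul_comm]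
      exact mul_le_mul_of_nonneg_left (poisson_le_ker t θ ht hθ) (norm_nonneg _)

end HmuAux

namespace HmuAux

lemma ker_le {x θ : ℝ} (hx : 0 < x) (hθ : θ ∈ Ioc (0 : ℝ) (2 * Real.pi)) :
    ker x θ ≤ 4 / x ∧ 0 ≤ ker x θ := by
  have h1 : 1 / (x + θ) ≤ 1 / x := one_div_le_one_div_of_le hx (by linarith [hθ.1])
  have h2 : 1 / (x + (2 * Real.pi - θ)) ≤ 1 / x :=
    one_div_le_one_div_of_le hx (by linarith [hθ.2])
  have e1 : 0 ≤ 1 / (x + θ) := by have := hθ.1; positivity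
  have e2 : 0 ≤ 1 / (x + (2 * Real.pi - θ)) := by
    have : 0 ≤ 2 * Real.pi - θ := by linarith [hθ.2]
    positivity
  unfold ker
  refine ⟨?_, by linarith⟩
  rw [show 4 / x = 2 * (1 / x + 1 / x) by ring]
  linarith

lemma exists_poly (f : ℂ → ℂ) (hf : DifferentiableOn ℂ f (ball (0 : ℂ) 1)) (r : ℝ)
    (hr : r ∈ Ico (0 : ℝ) 1) (ε : ℝ) (hε : 0 < ε) :
    ∃ q : Polynomial ℂ, ∀ z : ℂ, ‖z‖ ≤ 1 → ‖f (r * z) - q.eval z‖ ≤ ε := by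
  obtain ⟨r', h1, h2⟩ := exists_between hr.2
  obtain ⟨R, h3, h4⟩ := exists_between h2
  have hr'0 : 0 ≤ r' := hr.1.trans h1.le
  have hR0 : 0 ≤ R := hr'0.trans h3.le
  lift r' to NNReal using hr'0
  lift R to NNReal using hR0
  have hps := DifferentiableOn.hasFPowerSeriesOnBall (R := R) (c := 0) (f := f)
    (hf.mono (closedBall_subset_ball h4)) (by exact_mod_cast hr.1.trans_lt (h1.trans h3))
  have hu := hps.tendstoUniformlyOn (r' := r') (by exact_mod_cast h3)
  rw [Metric.tendstoUniformlyOn_iff] at hu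
  obtain ⟨n, hn⟩ := (hu ε hε).exists
  set p := cauchyPowerSeries f 0 R
  refine ⟨(∑ k ∈ Finset.range n, Polynomial.C (p.coeff k) * Polynomial.X ^ k).comp
    (Polynomial.C (r : ℂ) * Polynomial.X), fun z hz => ?_⟩
  have hmem : (r : ℂ) * z ∈ ball (0 : ℂ) r' := by
    rw [mem_ball_zero_iff, norm_mul, Complex.norm_real, Real.norm_eq_abs, abs_of_nonneg hr.1]
    nlinarith [hr.1, norm_nonneg z]
  have := hn _ hmem
  rw [dist_eq_norm, zero_add] at this
  refine le_of_eq_of_le ?_ this.le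
  congr 2
  simp only [Polynomial.eval_comp, Polynomial.eval_mul, Polynomial.eval_C, Polynomial.eval_X,
    Polynomial.eval_finsetSum, Polynomial.eval_pow, FormalMultilinearSeries.partialSum]
  refine Finset.sum_congr rfl fun k _ => ?_
  rw [FormalMultilinearSeries.apply_eq_pow_smul_coeff, smul_eq_mul, mul_comm]

lemma sqrt_add_le' (a b : ℝ) (ha : 0 ≤ a) (hb : 0 ≤ b) :
    Real.sqrt (a + b) ≤ Real.sqrt a + Real.sqrt b := by
  rw [Real.sqrt_le_left (by positivity)]
  nlinarith [Real.sq_sqrt ha, Real.sq_sqrt hb, mul_nonneg (Real.sqrt_nonneg a) (Real.sqrt_nonneg b)]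

lemma hol_bound (f : ℂ → ℂ) (hf : DifferentiableOn ℂ f (ball (0 : ℂ) 1)) (r : ℝ)
    (hr : r ∈ Ico (0 : ℝ) 1) (t : ℝ) (ht : t ∈ Ico (0 : ℝ) 1) :
    ENNReal.ofReal (Real.sqrt ‖f ((r : ℂ) * t)‖) ≤
      ∫⁻ θ in Ioc (0 : ℝ) (2 * Real.pi),
        ENNReal.ofReal (Real.sqrt ‖f ((r : ℂ) * Complex.exp (θ * Complex.I))‖ * ker (1 - t) θ) := by
  have hx : 0 < 1 - t := by linarith [ht.2]
  have hpi := Real.pi_pos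
  set I := ∫⁻ θ in Ioc (0 : ℝ) (2 * Real.pi),
        ENNReal.ofReal (Real.sqrt ‖f ((r : ℂ) * Complex.exp (θ * Complex.I))‖ * ker (1 - t) θ)
    with hI
  have key : ∀ δ : ℝ, 0 < δ → ENNReal.ofReal (Real.sqrt ‖f ((r : ℂ) * t)‖) ≤
      I + ENNReal.ofReal (δ * (1 + 4 / (1 - t) * (2 * Real.pi))) := by
    intro δ hδ
    obtain ⟨q, hq⟩ := exists_poly f hf r hr (δ ^ 2) (by positivity)
    have hA : ∀ a b : ℂ, ‖a - b‖ ≤ δ ^ 2 → Real.sqrt ‖a‖ ≤ Real.sqrt ‖b‖ + δ := by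
      intro a b h
      have h1 : ‖a‖ ≤ ‖b‖ + δ ^ 2 := by
        have := norm_add_le (a - b) b
        rw [sub_add_cancel] at this
        linarith
      calc Real.sqrt ‖a‖ ≤ Real.sqrt (‖b‖ + δ ^ 2) := Real.sqrt_le_sqrt h1
        _ ≤ Real.sqrt ‖b‖ + Real.sqrt (δ ^ 2) := sqrt_add_le' _ _ (norm_nonneg _) (by positivity)
        _ = _ := by rw [Real.sqrt_sq hδ.le]
    have ht' : ‖(t : ℂ)‖ ≤ 1 := by
      rw [Complex.norm_real, Real.norm_eq_abs, abs_of_nonneg ht.1]; exact ht.2.le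
    have e1 := hA _ _ (hq t ht')
    have e2 := poly_bound q t ht
    have e3 : ∫⁻ θ in Ioc (0 : ℝ) (2 * Real.pi),
        ENNReal.ofReal (Real.sqrt ‖q.eval (Complex.exp (θ * Complex.I))‖ * ker (1 - t) θ) ≤
        I + ENNReal.ofReal (δ * (4 / (1 - t))) * ENNReal.ofReal (2 * Real.pi) := by
      calc _ ≤ ∫⁻ θ in Ioc (0 : ℝ) (2 * Real.pi),
            (ENNReal.ofReal (Real.sqrt ‖f ((r : ℂ) * Complex.exp (θ * Complex.I))‖ *
              ker (1 - t) θ) + ENNReal.ofReal (δ * (4 / (1 - t)))) := by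
            refine setLIntegral_mono' measurableSet_Ioc fun θ hθ => ?_
            obtain ⟨k1, k2⟩ := ker_le hx hθ
            rw [← ENNReal.ofReal_add (by positivity) (by positivity)]
            apply ENNReal.ofReal_le_ofReal
            have hn : ‖Complex.exp (θ * Complex.I)‖ ≤ 1 := (Complex.norm_exp_ofReal_mul_I θ).le
            have := hq _ hn
            rw [norm_sub_rev] at this
            have := hA _ _ this
            nlinarith
        _ = _ := by
            rw [lintegral_add_right _ measurable_const]
            simp [hI]
    calc _ ≤ ENNReal.ofReal (Real.sqrt ‖q.eval (t : ℂ)‖ + δ) := ENNReal.ofReal_le_ofReal e1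
      _ = ENNReal.ofReal (Real.sqrt ‖q.eval (t : ℂ)‖) + ENNReal.ofReal δ :=
        ENNReal.ofReal_add (by positivity) hδ.le
      _ ≤ (I + ENNReal.ofReal (δ * (4 / (1 - t))) * ENNReal.ofReal (2 * Real.pi)) +
          ENNReal.ofReal δ := by gcongr; exact e2.trans e3
      _ = _ := by
        rw [← ENNReal.ofReal_mul (by positivity), add_assoc,
          ← ENNReal.ofReal_add (by positivity) hδ.le]
        congr 2
        ring
  refine ENNReal.le_of_forall_pos_le_add fun ε hε _ => ?_
  have hK : 0 < 1 + 4 / (1 - t) * (2 * Real.pi) := by positivity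
  have := key (ε / (1 + 4 / (1 - t) * (2 * Real.pi))) (by positivity)
  rwa [div_mul_cancel₀ _ hK.ne', ENNReal.ofReal_coe_nnreal] at this

lemma hilbert_aux (x : ℝ) (hx : 0 < x) :
    ∫⁻ θ in Ioi (0 : ℝ), ENNReal.ofReal (1 / (x + θ)) * ENNReal.ofReal (θ ^ (-(1 / 2) : ℝ)) ≤
      ENNReal.ofReal (4 * x ^ (-(1 / 2) : ℝ)) := by
  have hi1 : IntervalIntegrable (fun θ : ℝ => θ ^ (-(1 / 2) : ℝ)) volume 0 x :=
    intervalIntegral.intervalIntegrable_rpow' (by norm_num)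
  have h1 : ∫⁻ θ in Ioc (0 : ℝ) x,
      ENNReal.ofReal (1 / (x + θ)) * ENNReal.ofReal (θ ^ (-(1 / 2) : ℝ)) ≤
      ENNReal.ofReal (2 * x ^ (-(1 / 2) : ℝ)) := by
    calc _ ≤ ∫⁻ θ in Ioc (0 : ℝ) x, ENNReal.ofReal (1 / x * θ ^ (-(1 / 2) : ℝ)) := by
          refine setLIntegral_mono' measurableSet_Ioc fun θ hθ => ?_
          have := hθ.1
          rw [← ENNReal.ofReal_mul (by positivity)]
          apply ENNReal.ofReal_le_ofReal
          gcongr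
          linarith
      _ = ENNReal.ofReal (∫ θ in Ioc (0 : ℝ) x, 1 / x * θ ^ (-(1 / 2) : ℝ)) := by
          rw [ofReal_integral_eq_lintegral_ofReal]
          · exact ((intervalIntegrable_iff_integrableOn_Ioc_of_le hx.le).1 hi1).const_mul _
          · refine (ae_restrict_iff' measurableSet_Ioc).2 (ae_of_all _ fun θ hθ => ?_)
            have := hθ.1
            simp only [Pi.zero_apply]
            positivity
      _ ≤ _ := by
          apply ENNReal.ofReal_le_ofReal
          rw [integral_const_mul, ← intervalIntegral.integral_of_le hx.le,
            integral_rpow (Or.inl (by norm_num))]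
          rw [Real.zero_rpow (by norm_num), show (-(1 / 2) + 1 : ℝ) = 1 + -(1 / 2) by norm_num,
            Real.rpow_add hx, Real.rpow_one]
          apply le_of_eq
          field_simp
          norm_num
  have h2 : ∫⁻ θ in Ioi x,
      ENNReal.ofReal (1 / (x + θ)) * ENNReal.ofReal (θ ^ (-(1 / 2) : ℝ)) ≤
      ENNReal.ofReal (2 * x ^ (-(1 / 2) : ℝ)) := by
    calc _ ≤ ∫⁻ θ in Ioi x, ENNReal.ofReal (θ ^ (-(3 / 2) : ℝ)) := by
          refine setLIntegral_mono' measurableSet_Ioi fun θ hθ => ?_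
          have hθ' : x < θ := hθ
          have : 0 < θ := by linarith
          rw [← ENNReal.ofReal_mul (by positivity)]
          apply ENNReal.ofReal_le_ofReal
          rw [show (-(3 / 2) : ℝ) = -1 + -(1 / 2) by norm_num, Real.rpow_add this,
            Real.rpow_neg_one, ← one_div]
          gcongr
          linarith
      _ = ENNReal.ofReal (∫ θ in Ioi x, θ ^ (-(3 / 2) : ℝ)) := by
          rw [ofReal_integral_eq_lintegral_ofReal]
          · exact integrableOn_Ioi_rpow_of_lt (by norm_num) hx
          · refine (ae_restrict_iff' measurableSet_Ioi).2 (ae_of_all _ fun θ hθ => ?_)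
            have hθ' : x < θ := hθ
            have : 0 < θ := by linarith
            simp only [Pi.zero_apply]
            positivity
      _ ≤ _ := by
          apply ENNReal.ofReal_le_ofReal
          rw [integral_Ioi_rpow_of_lt (by norm_num) hx]
          norm_num
          apply le_of_eq
          ring
  rw [← Ioc_union_Ioi_eq_Ioi hx.le, lintegral_union measurableSet_Ioi Ioc_disjoint_Ioi_same]
  refine (add_le_add h1 h2).trans ?_
  rw [← ENNReal.ofReal_add (by positivity) (by positivity)]
  apply ENNReal.ofReal_le_ofReal
  linarith

lemma cauchy_schwarz {m : Measure ℝ} (a b : ℝ → ℝ≥0∞) (ha : Measurable a) (hb : Measurable b) :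
    (∫⁻ x, a x * b x ∂m) ^ 2 ≤ (∫⁻ x, a x ^ 2 ∂m) * (∫⁻ x, b x ^ 2 ∂m) := by
  have h := ENNReal.lintegral_mul_le_Lp_mul_Lq m Real.HolderConjugate.two_two
    ha.aemeasurable hb.aemeasurable
  simp only [Pi.mul_apply] at h
  refine (pow_le_pow_left' h 2).trans (le_of_eq ?_)
  rw [mul_pow, ← ENNReal.rpow_natCast, ← ENNReal.rpow_natCast, ← ENNReal.rpow_mul,
    ← ENNReal.rpow_mul]
  norm_num

lemma hilbert (u : ℝ → ℝ≥0∞) (hu : Measurable u) :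
    ∫⁻ x in Ioi (0 : ℝ), (∫⁻ θ in Ioi (0 : ℝ), u θ * ENNReal.ofReal (1 / (x + θ))) ^ 2 ≤
      16 * ∫⁻ θ in Ioi (0 : ℝ), u θ ^ 2 := by
  have step1 : ∀ x ∈ Ioi (0 : ℝ),
      (∫⁻ θ in Ioi (0 : ℝ), u θ * ENNReal.ofReal (1 / (x + θ))) ^ 2 ≤
      ∫⁻ θ in Ioi (0 : ℝ), u θ ^ 2 * ENNReal.ofReal (θ ^ (1 / 2 : ℝ)) *
        (4 * (ENNReal.ofReal (1 / (θ + x)) * ENNReal.ofReal (x ^ (-(1 / 2) : ℝ)))) := by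
    intro x hx
    have hx' : 0 < x := hx
    set a : ℝ → ℝ≥0∞ := fun θ =>
      u θ * ENNReal.ofReal (Real.sqrt (1 / (x + θ)) * θ ^ (1 / 4 : ℝ)) with ha
    set b : ℝ → ℝ≥0∞ := fun θ =>
      ENNReal.ofReal (Real.sqrt (1 / (x + θ)) * θ ^ (-(1 / 4) : ℝ)) with hb
    have hab : ∫⁻ θ in Ioi (0 : ℝ), u θ * ENNReal.ofReal (1 / (x + θ)) =
        ∫⁻ θ in Ioi (0 : ℝ), a θ * b θ := by
      refine setLIntegral_congr_fun measurableSet_Ioi fun θ hθ => ?_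
      have hθ' : 0 < θ := hθ
      simp only [ha, hb]
      rw [mul_assoc, ← ENNReal.ofReal_mul (by positivity)]
      congr 2
      have e1 := Real.mul_self_sqrt (show 0 ≤ 1 / (x + θ) by positivity)
      have e2 : θ ^ (1 / 4 : ℝ) * θ ^ (-(1 / 4) : ℝ) = 1 := by
        rw [← Real.rpow_add hθ']; norm_num
      calc 1 / (x + θ) = (Real.sqrt (1 / (x + θ)) * Real.sqrt (1 / (x + θ))) *
            (θ ^ (1 / 4 : ℝ) * θ ^ (-(1 / 4) : ℝ)) := by rw [e1, e2, mul_one]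
        _ = _ := by ring
    have hb2 : ∫⁻ θ in Ioi (0 : ℝ), b θ ^ 2 ≤ ENNReal.ofReal (4 * x ^ (-(1 / 2) : ℝ)) := by
      refine le_trans (le_of_eq ?_) (hilbert_aux x hx')
      refine setLIntegral_congr_fun measurableSet_Ioi fun θ hθ => ?_
      have hθ' : 0 < θ := hθ
      simp only [hb]
      rw [← ENNReal.ofReal_mul (by positivity), ← ENNReal.ofReal_pow (by positivity), mul_pow,
        Real.sq_sqrt (by positivity), ← Real.rpow_mul_natCast hθ'.le]
      norm_num
    have ha2 : ∫⁻ θ in Ioi (0 : ℝ), a θ ^ 2 =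
        ∫⁻ θ in Ioi (0 : ℝ), u θ ^ 2 * ENNReal.ofReal (θ ^ (1 / 2 : ℝ)) *
          ENNReal.ofReal (1 / (θ + x)) := by
      refine setLIntegral_congr_fun measurableSet_Ioi fun θ hθ => ?_
      have hθ' : 0 < θ := hθ
      simp only [ha]
      rw [mul_pow, mul_assoc, ← ENNReal.ofReal_mul (by positivity),
        ← ENNReal.ofReal_pow (by positivity), mul_pow,
        Real.sq_sqrt (by positivity), ← Real.rpow_mul_natCast hθ'.le, add_comm θ x]
      norm_num
      rw [mul_comm (θ ^ _)]
    rw [hab]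
    refine (cauchy_schwarz a b (by fun_prop) (by fun_prop)).trans ?_
    rw [ha2]
    refine (mul_le_mul_right hb2 _).trans (le_of_eq ?_)
    rw [← lintegral_mul_const _ (by fun_prop)]
    refine lintegral_congr fun θ => ?_
    rw [ENNReal.ofReal_mul (by norm_num)]
    simp only [ENNReal.ofReal_ofNat]
    ring
  calc _ ≤ ∫⁻ x in Ioi (0 : ℝ), ∫⁻ θ in Ioi (0 : ℝ),
        u θ ^ 2 * ENNReal.ofReal (θ ^ (1 / 2 : ℝ)) *
        (4 * (ENNReal.ofReal (1 / (θ + x)) * ENNReal.ofReal (x ^ (-(1 / 2) : ℝ)))) :=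
        setLIntegral_mono' measurableSet_Ioi step1
    _ = ∫⁻ θ in Ioi (0 : ℝ), ∫⁻ x in Ioi (0 : ℝ),
        u θ ^ 2 * ENNReal.ofReal (θ ^ (1 / 2 : ℝ)) *
        (4 * (ENNReal.ofReal (1 / (θ + x)) * ENNReal.ofReal (x ^ (-(1 / 2) : ℝ)))) := by
        apply lintegral_lintegral_swap
        apply Measurable.aemeasurable
        unfold Function.uncurry
        fun_prop
    _ ≤ ∫⁻ θ in Ioi (0 : ℝ), 16 * u θ ^ 2 := by
        refine setLIntegral_mono' measurableSet_Ioi fun θ hθ => ?_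
        have hθ' : 0 < θ := hθ
        rw [lintegral_const_mul _ (by fun_prop), lintegral_const_mul _ (by fun_prop)]
        calc _ ≤ u θ ^ 2 * ENNReal.ofReal (θ ^ (1 / 2 : ℝ)) *
              (4 * ENNReal.ofReal (4 * θ ^ (-(1 / 2) : ℝ))) := by
              gcongr
              exact hilbert_aux θ hθ'
          _ = u θ ^ 2 * (ENNReal.ofReal (θ ^ (1 / 2 : ℝ)) *
              (ENNReal.ofReal 4 * ENNReal.ofReal (4 * θ ^ (-(1 / 2) : ℝ)))) := by
              simp only [ENNReal.ofReal_ofNat]; ring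
          _ = _ := by
              rw [← ENNReal.ofReal_mul (by positivity), ← ENNReal.ofReal_mul (by positivity),
                mul_comm]
              congr 1
              have e2 : θ ^ (1 / 2 : ℝ) * θ ^ (-(1 / 2) : ℝ) = 1 := by
                rw [← Real.rpow_add hθ']; norm_num
              rw [show θ ^ (1 / 2 : ℝ) * (4 * (4 * θ ^ (-(1 / 2) : ℝ))) =
                16 * (θ ^ (1 / 2 : ℝ) * θ ^ (-(1 / 2) : ℝ)) by ring, e2]
              norm_num
    _ = _ := lintegral_const_mul _ (by fun_prop)

end HmuAux

namespace HmuAux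

lemma upset_dom (μ l : Measure ℝ) (C : ℝ≥0∞)
    (h : ∀ t ∈ Ico (0 : ℝ) 1, μ (Ico t 1) ≤ C * l (Ioo t 1))
    (S : Set ℝ) (hS : S ⊆ Ico 0 1) (hup : ∀ a ∈ S, ∀ b ∈ Ico (0 : ℝ) 1, a ≤ b → b ∈ S) :
    μ S ≤ C * l S := by
  rcases S.eq_empty_or_nonempty with rfl | ⟨a, ha⟩
  · simp
  have hbdd : BddBelow S := ⟨0, fun x hx => (hS hx).1⟩
  have hs0 : 0 ≤ sInf S := le_csInf ⟨a, ha⟩ fun x hx => (hS hx).1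
  have hs1 : sInf S < 1 := (csInf_le hbdd ha).trans_lt (hS ha).2
  have h1 : S ⊆ Ico (sInf S) 1 := fun x hx => ⟨csInf_le hbdd hx, (hS hx).2⟩
  have h2 : Ioo (sInf S) 1 ⊆ S := by
    intro x hx
    obtain ⟨y, hy, hyx⟩ := exists_lt_of_csInf_lt ⟨a, ha⟩ hx.1
    exact hup y hy x ⟨hs0.trans hx.1.le, hx.2⟩ hyx.le
  calc μ S ≤ μ (Ico (sInf S) 1) := measure_mono h1
    _ ≤ C * l (Ioo (sInf S) 1) := h _ ⟨hs0, hs1⟩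
    _ ≤ C * l S := by gcongr

lemma mono_dom_fin (μ l : Measure ℝ) (C : ℝ≥0∞) (hC : C ≠ ⊤)
    (h : ∀ t ∈ Ico (0 : ℝ) 1, μ (Ico t 1) ≤ C * l (Ioo t 1))
    (g : ℝ → ℝ≥0∞) (hg : MonotoneOn g (Ico 0 1)) (hfin : ∀ t, g t ≠ ⊤) :
    ∫⁻ t in Ico 0 1, g t ∂μ ≤ C * ∫⁻ t in Ico 0 1, g t ∂l := by
  have hmono : MonotoneOn (fun t => (g t).toReal) (Ico 0 1) := fun a ha b hb hab =>
    ENNReal.toReal_mono (hfin b) (hg ha hb hab)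
  have key : ∀ m : Measure ℝ, ∫⁻ t in Ico 0 1, g t ∂m =
      ∫⁻ c in Ioi (0 : ℝ), m ({t | c < (g t).toReal} ∩ Ico 0 1) := by
    intro m
    have h1 := lintegral_eq_lintegral_meas_lt (f := fun t => (g t).toReal) (m.restrict (Ico 0 1))
      (ae_of_all _ fun t => ENNReal.toReal_nonneg)
      (aemeasurable_restrict_of_monotoneOn measurableSet_Ico hmono)
    simp only [ENNReal.ofReal_toReal (hfin _)] at h1
    rw [h1]
    refine lintegral_congr fun c => ?_
    rw [Measure.restrict_apply' measurableSet_Ico]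
  rw [key, key, ← lintegral_const_mul' _ _ hC]
  refine lintegral_mono fun c => ?_
  refine upset_dom μ l C h _ inter_subset_right ?_
  rintro a ⟨ha, ha'⟩ b hb hab
  exact ⟨lt_of_lt_of_le ha (hmono ha' hb hab), hb⟩

lemma mono_dom (μ l : Measure ℝ) (C : ℝ≥0∞) (hC : C ≠ ⊤)
    (h : ∀ t ∈ Ico (0 : ℝ) 1, μ (Ico t 1) ≤ C * l (Ioo t 1))
    (g : ℝ → ℝ≥0∞) (hg : MonotoneOn g (Ico 0 1)) :
    ∫⁻ t in Ico 0 1, g t ∂μ ≤ C * ∫⁻ t in Ico 0 1, g t ∂l := by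
  have hsup : ∀ t, g t = ⨆ n : ℕ, min (g t) n := by
    intro t
    have := inf_iSup_eq (g t) (fun n : ℕ => (n : ℝ≥0∞))
    rw [ENNReal.iSup_natCast] at this
    simpa using this
  have hmono : ∀ n : ℕ, MonotoneOn (fun t => min (g t) n) (Ico 0 1) := fun n a ha b hb hab =>
    min_le_min (hg ha hb hab) le_rfl
  calc ∫⁻ t in Ico 0 1, g t ∂μ = ∫⁻ t in Ico 0 1, ⨆ n : ℕ, min (g t) n ∂μ :=
        lintegral_congr fun t => hsup t
    _ = ⨆ n : ℕ, ∫⁻ t in Ico 0 1, min (g t) n ∂μ := by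
        refine lintegral_iSup' (fun n =>
          aemeasurable_restrict_of_monotoneOn measurableSet_Ico (hmono n)) ?_
        refine ae_of_all _ fun t n m hnm => min_le_min le_rfl ?_
        exact_mod_cast hnm
    _ ≤ C * ∫⁻ t in Ico 0 1, g t ∂l := by
        refine iSup_le fun n => ?_
        refine (mono_dom_fin μ l C hC h _ (hmono n) fun t => ?_).trans ?_
        · exact ne_top_of_le_ne_top (ENNReal.natCast_ne_top n) (min_le_right _ _)
        · gcongr
          exact min_le_left _ _

/-- Squared Poisson-type majorant. -/
noncomputable def maj (s : ℝ → ℝ) (t : ℝ) : ℝ≥0∞ :=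
  (∫⁻ θ in Ioc (0 : ℝ) (2 * Real.pi), ENNReal.ofReal (s θ * ker (1 - t) θ)) ^ 2

lemma measurable_maj (s : ℝ → ℝ) (hs : Measurable s) : Measurable (maj s) := by
  unfold maj
  apply Measurable.pow_const
  apply Measurable.lintegral_prod_right' (f := fun p : ℝ × ℝ =>
    ENNReal.ofReal (s p.2 * ker (1 - p.1) p.2))
  unfold ker
  fun_prop

lemma maj_mono (s : ℝ → ℝ) (hs0 : ∀ θ, 0 ≤ s θ) : MonotoneOn (maj s) (Ico 0 1) := by
  intro a ha b hb hab
  unfold maj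
  refine pow_le_pow_left' (setLIntegral_mono' measurableSet_Ioc fun θ hθ => ?_) 2
  apply ENNReal.ofReal_le_ofReal
  apply mul_le_mul_of_nonneg_left _ (hs0 θ)
  have h1 : 0 < 1 - b := by linarith [hb.2]
  have h2 := hθ.1
  have h3 : 0 ≤ 2 * Real.pi - θ := by linarith [hθ.2]
  unfold ker
  gcongr

lemma lint_Ioi_ind (F : ℝ → ℝ≥0∞) (hF : ∀ θ, θ ≤ 0 → F θ = 0) :
    ∫⁻ θ in Ioi (0 : ℝ), F θ = ∫⁻ θ, F θ := by
  rw [← lintegral_indicator measurableSet_Ioi]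
  refine lintegral_congr fun θ => ?_
  by_cases h : 0 < θ
  · simp [h]
  · simp [h, hF θ (not_lt.1 h)]

lemma maj_integral (s : ℝ → ℝ) (hs : Measurable s) (hs0 : ∀ θ, 0 ≤ s θ) :
    ∫⁻ t in Ico (0 : ℝ) 1, maj s t ≤
      512 * ∫⁻ θ in Ioc (0 : ℝ) (2 * Real.pi), ENNReal.ofReal (s θ ^ 2) := by
  set U : ℝ → ℝ≥0∞ := (Ioo (0 : ℝ) (2 * Real.pi)).indicator (fun θ => ENNReal.ofReal (s θ)) with hU
  have hUm : Measurable U := (by fun_prop : Measurable fun θ => ENNReal.ofReal (s θ)).indicator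
    measurableSet_Ioo
  have hVm : Measurable fun θ => U (2 * Real.pi - θ) := by fun_prop
  have hU0 : ∀ θ, θ ≤ 0 → U θ = 0 := fun θ h => by
    rw [hU, indicator_of_notMem]; intro h'; linarith [h'.1]
  have hV0 : ∀ θ, θ ≤ 0 → U (2 * Real.pi - θ) = 0 := fun θ h => by
    rw [hU, indicator_of_notMem]; intro h'; linarith [h'.2]
  set A : ℝ → ℝ≥0∞ := fun x => ∫⁻ θ in Ioi (0 : ℝ), U θ * ENNReal.ofReal (1 / (x + θ))
  set B : ℝ → ℝ≥0∞ := fun x =>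
    ∫⁻ θ in Ioi (0 : ℝ), U (2 * Real.pi - θ) * ENNReal.ofReal (1 / (x + θ))
  have hAB : ∀ x, 0 < x →
      ∫⁻ θ in Ioc (0 : ℝ) (2 * Real.pi), ENNReal.ofReal (s θ * ker x θ) = 2 * (A x + B x) := by
    intro x hx
    have hA : A x = ∫⁻ θ, U θ * ENNReal.ofReal (1 / (x + θ)) :=
      lint_Ioi_ind _ fun θ h => by rw [hU0 θ h, zero_mul]
    have hB : B x = ∫⁻ θ, U θ * ENNReal.ofReal (1 / (x + (2 * Real.pi - θ))) := by
      rw [← lintegral_sub_left_eq_self _ (2 * Real.pi)]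
      simp only [sub_sub_cancel]
      exact lint_Ioi_ind _ fun θ h => by rw [hV0 θ h, zero_mul]
    rw [hA, hB, ← lintegral_add_left (by fun_prop), ← lintegral_const_mul _ (by fun_prop),
      setLIntegral_congr Ioo_ae_eq_Ioc.symm, ← lintegral_indicator measurableSet_Ioo]
    refine lintegral_congr fun θ => ?_
    by_cases h : θ ∈ Ioo (0 : ℝ) (2 * Real.pi)
    · rw [indicator_of_mem h, hU, indicator_of_mem h, ← mul_add]
      have h1 := h.1
      have h2 : 0 < 2 * Real.pi - θ := by linarith [h.2]
      rw [← ENNReal.ofReal_add (by positivity) (by positivity), ← ENNReal.ofReal_mul (hs0 θ),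
        ← ENNReal.ofReal_ofNat 2, ← ENNReal.ofReal_mul (by norm_num)]
      congr 1
      unfold ker
      ring
    · rw [indicator_of_notMem h, hU, indicator_of_notMem h]
      simp
  have hsq : ∀ a b : ℝ≥0∞, (2 * (a + b)) ^ 2 ≤ 16 * (a ^ 2 + b ^ 2) := by
    intro a b
    rcases le_total a b with h | h
    · calc (2 * (a + b)) ^ 2 ≤ (2 * (b + b)) ^ 2 := by gcongr
        _ = 16 * b ^ 2 := by ring
        _ ≤ _ := by gcongr; exact le_add_self
    · calc (2 * (a + b)) ^ 2 ≤ (2 * (a + a)) ^ 2 := by gcongr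
        _ = 16 * a ^ 2 := by ring
        _ ≤ _ := by gcongr; exact le_self_add
  have hAm : Measurable A := by
    apply Measurable.lintegral_prod_right' (f := fun p : ℝ × ℝ =>
      U p.2 * ENNReal.ofReal (1 / (p.1 + p.2)))
    fun_prop
  have hBm : Measurable B := by
    apply Measurable.lintegral_prod_right' (f := fun p : ℝ × ℝ =>
      U (2 * Real.pi - p.2) * ENNReal.ofReal (1 / (p.1 + p.2)))
    fun_prop
  have hstep : ∫⁻ t in Ico (0 : ℝ) 1, maj s t ≤
      ∫⁻ x in Ioi (0 : ℝ), 16 * (A x ^ 2 + B x ^ 2) := by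
    rw [← lintegral_indicator measurableSet_Ico, ← lintegral_indicator measurableSet_Ioi,
      ← lintegral_sub_left_eq_self _ (1 : ℝ)]
    refine lintegral_mono fun x => ?_
    by_cases h : 1 - x ∈ Ico (0 : ℝ) 1
    · have hx : x ∈ Ioi (0 : ℝ) := by have := h.2; simp at this; exact this
      rw [indicator_of_mem h, indicator_of_mem hx]
      unfold maj
      rw [sub_sub_cancel, hAB x hx]
      exact hsq _ _
    · rw [indicator_of_notMem h]
      exact zero_le
  refine hstep.trans ?_
  rw [lintegral_const_mul _ (by fun_prop), lintegral_add_left (by fun_prop)]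
  have hUsq : ∫⁻ θ, U θ ^ 2 = ∫⁻ θ in Ioc (0 : ℝ) (2 * Real.pi), ENNReal.ofReal (s θ ^ 2) := by
    rw [setLIntegral_congr Ioo_ae_eq_Ioc.symm, ← lintegral_indicator measurableSet_Ioo]
    refine lintegral_congr fun θ => ?_
    by_cases h : θ ∈ Ioo (0 : ℝ) (2 * Real.pi)
    · rw [indicator_of_mem h, hU, indicator_of_mem h, ENNReal.ofReal_pow (hs0 θ)]
    · rw [indicator_of_notMem h, hU, indicator_of_notMem h]
      simp
  have h1 := hilbert U hUm
  have h2 := hilbert _ hVm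
  rw [lint_Ioi_ind (fun θ => U θ ^ 2) (fun θ h => by rw [hU0 θ h]; simp), hUsq] at h1
  rw [lint_Ioi_ind (fun θ => U (2 * Real.pi - θ) ^ 2) (fun θ h => by rw [hV0 θ h]; simp),
    lintegral_sub_left_eq_self (fun θ => U θ ^ 2) (2 * Real.pi), hUsq] at h2
  calc _ ≤ 16 * (16 * (∫⁻ θ in Ioc (0 : ℝ) (2 * Real.pi), ENNReal.ofReal (s θ ^ 2)) +
        16 * (∫⁻ θ in Ioc (0 : ℝ) (2 * Real.pi), ENNReal.ofReal (s θ ^ 2))) := by gcongr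
    _ = _ := by ring

end HmuAux

namespace HmuAux

noncomputable def LL (α t : ℝ) : ℝ := (Real.log (2 / (1 - t))) ^ α

lemma log_ge (t : ℝ) (ht : t ∈ Ico (0:ℝ) 1) : Real.log 2 ≤ Real.log (2 / (1 - t)) := by
  have h1 : 0 < 1 - t := by linarith [ht.2]
  apply Real.log_le_log (by norm_num)
  rw [le_div_iff₀ h1]; nlinarith [ht.1]

lemma log_pos' (t : ℝ) (ht : t ∈ Ico (0:ℝ) 1) : 0 < Real.log (2 / (1 - t)) :=
  lt_of_lt_of_le (Real.log_pos (by norm_num)) (log_ge t ht)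

lemma log_mono' : MonotoneOn (fun t : ℝ => Real.log (2 / (1 - t))) (Ico 0 1) := by
  intro a ha b hb hab
  have h1 : 0 < 1 - b := by linarith [hb.2]
  have h2 : 0 < 1 - a := by linarith [ha.2]
  apply Real.log_le_log (by positivity)
  gcongr

lemma LL_pos (α t : ℝ) (ht : t ∈ Ico (0:ℝ) 1) : 0 < LL α t :=
  Real.rpow_pos_of_pos (log_pos' t ht) α

lemma LL_mono (α : ℝ) (hα : 0 < α) : MonotoneOn (LL α) (Ico 0 1) := by
  intro a ha b hb hab
  exact Real.rpow_le_rpow (log_pos' a ha).le (log_mono' ha hb hab) hα.le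

lemma LL_anti (α : ℝ) (hα : α < 0) : AntitoneOn (LL α) (Ico 0 1) := by
  intro a ha b hb hab
  exact Real.rpow_le_rpow_of_nonpos (log_pos' a ha) (log_mono' ha hb hab) hα.le

lemma LL_meas (α : ℝ) : Measurable (LL α) := by
  unfold LL; fun_prop

lemma LL_double (α : ℝ) (hα : 0 < α) (hα1 : α < 1) (t : ℝ) (ht : t ∈ Ico (0:ℝ) 1) :
    LL α ((1 + t) / 2) ≤ 2 * LL α t := by
  have h1 : 0 < 1 - t := by linarith [ht.2]
  have hp := log_pos' t ht
  have h2 : Real.log (2 / (1 - (1 + t) / 2)) ≤ 2 * Real.log (2 / (1 - t)) := by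
    have : 2 / (1 - (1 + t) / 2) = 2 * (2 / (1 - t)) := by rw [show 1 - (1 + t) / 2 = (1 - t) / 2 by ring]; field_simp
    rw [this, Real.log_mul (by norm_num) (by positivity)]
    linarith [log_ge t ht]
  have hm : (1 + t) / 2 ∈ Ico (0:ℝ) 1 := ⟨by linarith [ht.1], by linarith [ht.2]⟩
  calc LL α ((1 + t) / 2) ≤ (2 * Real.log (2 / (1 - t))) ^ α :=
        Real.rpow_le_rpow (log_pos' _ hm).le h2 hα.le
    _ = 2 ^ α * LL α t := by rw [Real.mul_rpow (by norm_num) hp.le]; rfl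
    _ ≤ 2 * LL α t := by
        apply mul_le_mul_of_nonneg_right _ (LL_pos α t ht).le
        calc (2:ℝ) ^ α ≤ 2 ^ (1:ℝ) := Real.rpow_le_rpow_of_exponent_le (by norm_num) hα1.le
          _ = 2 := by simp

lemma tail_dom (α : ℝ) (hα : 0 < α) (hα1 : α < 1) (μ : Measure ℝ) [IsFiniteMeasure μ]
    (C : ℝ) (hC : 0 < C)
    (h : ∀ t ∈ Ico (0 : ℝ) 1, (μ (Ico t 1)).toReal * LL α t ≤ C * (1 - t))
    (t : ℝ) (ht : t ∈ Ico (0:ℝ) 1) :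
    μ (Ico t 1) ≤ ENNReal.ofReal (4 * C) *
      (volume.withDensity (fun t => ENNReal.ofReal (LL α t)⁻¹)) (Ioo t 1) := by
  have h1 : 0 < 1 - t := by linarith [ht.2]
  have hL := LL_pos α t ht
  have hm : (1 + t) / 2 ∈ Ico (0:ℝ) 1 := ⟨by linarith [ht.1], by linarith [ht.2]⟩
  rw [withDensity_apply _ measurableSet_Ioo]
  have key : ENNReal.ofReal ((2 * LL α t)⁻¹ * ((1 - t) / 2)) ≤
      ∫⁻ x in Ioo t 1, ENNReal.ofReal (LL α x)⁻¹ := by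
    calc ENNReal.ofReal ((2 * LL α t)⁻¹ * ((1 - t) / 2))
        = ∫⁻ x in Ioo t ((1+t)/2), ENNReal.ofReal (2 * LL α t)⁻¹ := by
          rw [setLIntegral_const, Real.volume_Ioo, ← ENNReal.ofReal_mul (by positivity)]
          congr 2; ring
      _ ≤ ∫⁻ x in Ioo t ((1+t)/2), ENNReal.ofReal (LL α x)⁻¹ := by
          refine setLIntegral_mono' measurableSet_Ioo fun x hx => ?_
          have hx' : x ∈ Ico (0:ℝ) 1 := ⟨by linarith [ht.1, hx.1], by linarith [hm.2, hx.2]⟩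
          apply ENNReal.ofReal_le_ofReal
          apply inv_anti₀ (LL_pos α x hx')
          exact (LL_mono α hα hx' hm hx.2.le).trans (LL_double α hα hα1 t ht)
      _ ≤ _ := lintegral_mono_set (Ioo_subset_Ioo le_rfl hm.2.le)
  calc μ (Ico t 1) = ENNReal.ofReal (μ (Ico t 1)).toReal := by
        rw [ENNReal.ofReal_toReal (measure_ne_top _ _)]
    _ ≤ ENNReal.ofReal ((4 * C) * ((2 * LL α t)⁻¹ * ((1 - t) / 2))) := by
        apply ENNReal.ofReal_le_ofReal
        have := h t ht
        rw [show (4 * C) * ((2 * LL α t)⁻¹ * ((1 - t) / 2)) = C * (1 - t) / LL α t by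
          field_simp; ring, le_div_iff₀ hL]
        exact this
    _ ≤ _ := by
        rw [ENNReal.ofReal_mul (by positivity)]
        gcongr

lemma emb_r (α : ℝ) (hα : 0 < α) (hα1 : α < 1) (μ : Measure ℝ) [IsFiniteMeasure μ]
    (C : ℝ) (hC : 0 < C)
    (h : ∀ t ∈ Ico (0 : ℝ) 1, (μ (Ico t 1)).toReal * LL α t ≤ C * (1 - t))
    (f : ℂ → ℂ) (hf : DifferentiableOn ℂ f (ball 0 1)) (r : ℝ) (hr : r ∈ Ico (0:ℝ) 1) :
    ∫⁻ t in Ico (0:ℝ) 1, ENNReal.ofReal ‖f (r * t)‖ * ENNReal.ofReal (LL α t) ∂μ ≤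
      ENNReal.ofReal (4 * C) * (512 * ∫⁻ θ in Ioc (0 : ℝ) (2 * Real.pi),
        ENNReal.ofReal ‖f ((r : ℂ) * Complex.exp ((θ : ℂ) * Complex.I))‖) := by
  set s : ℝ → ℝ := fun θ => √‖f ((r : ℂ) * Complex.exp ((θ : ℂ) * Complex.I))‖ with hs
  have hs0 : ∀ θ, 0 ≤ s θ := fun θ => Real.sqrt_nonneg _
  have hsc : Continuous s := by
    apply Continuous.sqrt
    apply Continuous.norm
    apply hf.continuousOn.comp_continuous (by fun_prop)
    intro θ
    simp [Complex.norm_exp_ofReal_mul_I, abs_of_nonneg hr.1, hr.2]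
  have hsm := hsc.measurable
  set G : ℝ → ℝ≥0∞ := fun t => maj s t * ENNReal.ofReal (LL α t) with hG
  have hGm : MonotoneOn G (Ico 0 1) := by
    intro a ha b hb hab
    exact mul_le_mul' (maj_mono s hs0 ha hb hab) (ENNReal.ofReal_le_ofReal (LL_mono α hα ha hb hab))
  calc _ ≤ ∫⁻ t in Ico (0:ℝ) 1, G t ∂μ := by
        refine setLIntegral_mono' measurableSet_Ico fun t ht => ?_
        apply mul_le_mul' _ le_rfl
        unfold maj
        calc ENNReal.ofReal ‖f (r * t)‖ = ENNReal.ofReal (√‖f (r * t)‖) ^ 2 := by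
              rw [← ENNReal.ofReal_pow (Real.sqrt_nonneg _), Real.sq_sqrt (norm_nonneg _)]
          _ ≤ _ := pow_le_pow_left' (hol_bound f hf r hr t ht) 2
    _ ≤ ENNReal.ofReal (4 * C) * ∫⁻ t in Ico (0:ℝ) 1, G t
          ∂(volume.withDensity (fun t => ENNReal.ofReal (LL α t)⁻¹)) :=
        mono_dom μ _ _ ENNReal.ofReal_ne_top (fun t ht => tail_dom α hα hα1 μ C hC h t ht) G hGm
    _ = ENNReal.ofReal (4 * C) * ∫⁻ t in Ico (0:ℝ) 1, maj s t := by
        congr 1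
        rw [setLIntegral_withDensity_eq_setLIntegral_mul _ (by have := LL_meas α; fun_prop)
          (by have := LL_meas α; have := measurable_maj s hsm; fun_prop) measurableSet_Ico]
        refine setLIntegral_congr_fun measurableSet_Ico fun t ht => ?_
        have hL := LL_pos α t ht
        simp only [Pi.mul_apply, hG]
        rw [mul_comm, mul_assoc, ← ENNReal.ofReal_mul hL.le, mul_inv_cancel₀ hL.ne']
        simp
    _ ≤ _ := by
        gcongr
        refine (maj_integral s hsm hs0).trans (le_of_eq ?_)
        congr 1
        refine lintegral_congr fun θ => ?_
        simp only [hs]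
        rw [Real.sq_sqrt (norm_nonneg _)]

lemma embedding (α : ℝ) (hα : 0 < α) (hα1 : α < 1) (μ : Measure ℝ) [IsFiniteMeasure μ]
    (C : ℝ) (hC : 0 < C)
    (h : ∀ t ∈ Ico (0 : ℝ) 1, (μ (Ico t 1)).toReal * LL α t ≤ C * (1 - t))
    (f : ℂ → ℂ) (hf : DifferentiableOn ℂ f (ball 0 1)) (N : ℝ≥0∞)
    (hN : ∀ r ∈ Ico (0:ℝ) 1, ∫⁻ θ in Ioc (0 : ℝ) (2 * Real.pi),
        ENNReal.ofReal ‖f ((r : ℂ) * Complex.exp ((θ : ℂ) * Complex.I))‖ ≤ N) :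
    ∫⁻ t in Ico (0:ℝ) 1, ENNReal.ofReal ‖f t‖ * ENNReal.ofReal (LL α t) ∂μ ≤
      ENNReal.ofReal (4 * C) * (512 * N) := by
  set r : ℕ → ℝ := fun n => 1 - 1 / ((n:ℝ) + 1) with hr
  have hrI : ∀ n, r n ∈ Ico (0:ℝ) 1 := by
    intro n
    have h0 : (0:ℝ) < (n:ℝ) + 1 := by positivity
    refine ⟨?_, ?_⟩
    · simp only [hr, sub_nonneg]; rw [div_le_one h0]; linarith [Nat.cast_nonneg (α := ℝ) n]
    · simp only [hr]; have : 0 < 1 / ((n:ℝ)+1) := by positivity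
      linarith
  have hrt : Tendsto r atTop (nhds 1) := by
    have := (tendsto_one_div_add_atTop_nhds_zero_nat (𝕜 := ℝ)).const_sub 1
    simpa [hr] using this
  set F : ℕ → ℝ → ℝ≥0∞ := fun n t => ENNReal.ofReal ‖f (r n * t)‖ * ENNReal.ofReal (LL α t)
  have hFm : ∀ n, AEMeasurable (F n) (μ.restrict (Ico 0 1)) := by
    intro n
    have : ContinuousOn (fun t : ℝ => f (r n * t)) (Ico 0 1) := by
      apply hf.continuousOn.comp (by fun_prop)
      intro t ht
      simp only [mem_ball_zero_iff, norm_mul, Complex.norm_real, Real.norm_eq_abs,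
        abs_of_nonneg (hrI n).1, abs_of_nonneg ht.1]
      nlinarith [(hrI n).1, (hrI n).2, ht.1, ht.2]
    have h2 := this.aemeasurable (μ := μ) measurableSet_Ico
    have h3 := LL_meas α
    exact (h2.norm.ennreal_ofReal).mul h3.ennreal_ofReal.aemeasurable
  calc _ = ∫⁻ t in Ico (0:ℝ) 1, liminf (fun n => F n t) atTop ∂μ := by
        refine setLIntegral_congr_fun measurableSet_Ico fun t ht => ?_
        symm
        apply Tendsto.liminf_eq
        refine ENNReal.Tendsto.mul_const ?_ (Or.inr ENNReal.ofReal_ne_top)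
        apply ENNReal.tendsto_ofReal
        apply Tendsto.norm
        have hc : ContinuousAt f (t:ℂ) := by
          apply (hf.continuousOn.continuousAt)
          apply isOpen_ball.mem_nhds
          simp [abs_of_nonneg ht.1, ht.2]
        apply hc.tendsto.comp
        have : Tendsto (fun n => ((r n : ℝ) : ℂ) * (t:ℂ)) atTop (nhds (((1:ℝ):ℂ) * t)) :=
          ((Complex.continuous_ofReal.tendsto 1).comp hrt).mul_const _
        simpa using this
    _ ≤ liminf (fun n => ∫⁻ t in Ico (0:ℝ) 1, F n t ∂μ) atTop := lintegral_liminf_le' hFm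
    _ ≤ _ := by
        refine liminf_le_of_le (by isBoundedDefault) fun b hb => ?_
        obtain ⟨n, hn⟩ := hb.exists
        refine hn.trans ((emb_r α hα hα1 μ C hC h f hf (r n) (hrI n)).trans ?_)
        gcongr
        exact hN _ (hrI n)

end HmuAux

namespace HmuAux

lemma norm_one_sub (ρ θ : ℝ) :
    ‖1 - (ρ:ℂ) * Complex.exp (θ * Complex.I)‖ = ‖Complex.exp (θ * Complex.I) - ρ‖ := by
  have h1 : (starRingEnd ℂ) (Complex.exp (θ * Complex.I)) * Complex.exp (θ * Complex.I) = 1 := by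
    rw [← Complex.exp_conj, ← Complex.exp_add]; simp
  have h2 : (starRingEnd ℂ) (1 - (ρ:ℂ) * Complex.exp (θ * Complex.I)) * Complex.exp (θ * Complex.I)
      = Complex.exp (θ * Complex.I) - ρ := by
    simp only [map_sub, map_one, map_mul, Complex.conj_ofReal]
    linear_combination -(ρ:ℂ) * h1
  rw [← h2, norm_mul, Complex.norm_exp_ofReal_mul_I, mul_one, RCLike.norm_conj]

lemma angular (ρ : ℝ) (hρ : ρ ∈ Ico (0:ℝ) 1) :
    ∫⁻ θ in Ioo (-Real.pi) Real.pi,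
      ENNReal.ofReal (1 / ‖1 - (ρ:ℂ) * Complex.exp (θ * Complex.I)‖ ^ 2)
      ≤ ENNReal.ofReal (2 * Real.pi / (1 - ρ)) := by
  have hpi := Real.pi_pos
  have h0 : 0 < 1 - ρ := by linarith [hρ.2]
  have h1 : 0 < 1 - ρ ^ 2 := by nlinarith [hρ.1, hρ.2]
  have ht' : ‖(ρ : ℂ)‖ = ρ := by simp [abs_of_nonneg hρ.1]
  have hmem : (ρ : ℂ) ∈ ball (0 : ℂ) 1 := by rw [mem_ball_zero_iff, ht']; exact hρ.2
  have hne : ∀ θ : ℝ, ‖Complex.exp (θ * Complex.I) - ρ‖ ≠ 0 := by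
    intro θ
    have := norm_sub_norm_le (Complex.exp (θ * Complex.I)) ρ
    rw [Complex.norm_exp_ofReal_mul_I, ht'] at this
    linarith
  set h : ℝ → ℝ := fun θ => (1 - ρ ^ 2) / ‖Complex.exp (θ * Complex.I) - ρ‖ ^ 2 with hh
  have hcont : Continuous h := by
    apply Continuous.div (by fun_prop) (by fun_prop)
    intro θ; exact pow_ne_zero 2 (hne θ)
  have hper : Function.Periodic h (2 * Real.pi) := by
    intro θ
    simp only [hh]
    congr 4
    push_cast
    rw [add_mul, Complex.exp_add, Complex.exp_two_pi_mul_I, mul_one]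
  have hP := (diffContOnCl_const (c := (1:ℂ)) (𝕜 := ℂ)
    (s := ball (0:ℂ) 1)).circleAverage_poissonKernel_smul' hmem
  rw [Real.circleAverage_def] at hP
  have hI : ∫ θ in (0:ℝ)..(2 * Real.pi), h θ = 2 * Real.pi := by
    have e : ∀ θ : ℝ, ((‖circleMap 0 1 θ - 0‖ ^ 2 - ‖(ρ:ℂ) - 0‖ ^ 2) /
        ‖circleMap 0 1 θ - 0 - ((ρ:ℂ) - 0)‖ ^ 2) • (1:ℂ) = ((h θ : ℝ) : ℂ) := by
      intro θ
      have hc : circleMap 0 1 θ = Complex.exp (θ * Complex.I) := by simp [circleMap]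
      rw [hc]
      simp only [sub_zero, Complex.norm_exp_ofReal_mul_I, ht', one_pow, hh]
      simp
    simp_rw [e] at hP
    rw [intervalIntegral.integral_ofReal] at hP
    have hP' : (2 * Real.pi)⁻¹ * ∫ θ in (0:ℝ)..(2 * Real.pi), h θ = 1 := by
      rw [Complex.real_smul] at hP
      exact_mod_cast hP
    field_simp at hP'
    linarith
  have hI2 : ∫ θ in (-Real.pi)..Real.pi, h θ = 2 * Real.pi := by
    have := hper.intervalIntegral_add_eq (-Real.pi) 0
    rw [show -Real.pi + 2 * Real.pi = Real.pi by ring, zero_add] at this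
    rw [this, hI]
  have hpos : ∀ θ, 0 ≤ h θ := fun θ => by simp only [hh]; positivity
  calc _ ≤ ∫⁻ θ in Ioc (-Real.pi) Real.pi, ENNReal.ofReal ((1 - ρ ^ 2)⁻¹ * h θ) := by
        refine (lintegral_mono_set Ioo_subset_Ioc_self).trans (lintegral_mono fun θ => ?_)
        apply ENNReal.ofReal_le_ofReal
        rw [norm_one_sub]
        simp only [hh]
        apply le_of_eq
        field_simp
    _ = ENNReal.ofReal (∫ θ in Ioc (-Real.pi) Real.pi, (1 - ρ ^ 2)⁻¹ * h θ) := by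
        rw [ofReal_integral_eq_lintegral_ofReal]
        · exact (Continuous.integrableOn_Ioc (by fun_prop))
        · exact Eventually.of_forall fun θ => mul_nonneg (by positivity) (hpos θ)
    _ ≤ _ := by
        rw [← intervalIntegral.integral_of_le (by linarith), intervalIntegral.integral_const_mul, hI2]
        apply ENNReal.ofReal_le_ofReal
        rw [inv_mul_eq_div]
        gcongr
        nlinarith [hρ.1, hρ.2]

lemma hasDeriv_LL (α : ℝ) (hα : 0 < α) (x : ℝ) (hx : x ∈ Ico (0:ℝ) 1) :
    HasDerivAt (fun r => LL α r / α) (LL (α - 1) x / (1 - x)) x := by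
  have h1 : 1 - x ≠ 0 := by linarith [hx.2]
  have hp := log_pos' x hx
  have e1 : HasDerivAt (fun r : ℝ => 2 / (1 - r)) (2 / (1 - x) ^ 2) x := by
    have := ((hasDerivAt_id x).const_sub 1).inv h1 |>.const_mul 2
    convert! this using 1
    simp; ring
  have e2 := e1.log (by positivity)
  have e3 := (e2.rpow_const (p := α) (Or.inl hp.ne')).div_const α
  convert! e3 using 1
  unfold LL
  field_simp

lemma radial (α : ℝ) (hα : 0 < α) (hα1 : α < 1) (t : ℝ) (ht : t ∈ Ico (0:ℝ) 1) :
    ∫⁻ r in Ioo (0:ℝ) 1, ENNReal.ofReal (LL (α - 1) r / (1 - t * r)) ≤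
      ENNReal.ofReal ((1 / α + 1 / Real.log 2) * LL α t) := by
  have h1 : 0 < 1 - t := by linarith [ht.2]
  have hlog2 : 0 < Real.log 2 := Real.log_pos (by norm_num)
  have hL := LL_pos α t ht
  have hL0 := LL_pos α 0 (by simp)
  have hint : IntegrableOn (fun x => LL (α - 1) x / (1 - x)) (Ioc 0 t) := by
    apply intervalIntegral.integrableOn_deriv_of_nonneg (g := fun r => LL α r / α)
    · intro x hx
      exact (hasDeriv_LL α hα x ⟨hx.1, by linarith [hx.2, ht.2]⟩).continuousAt.continuousWithinAt
    · intro x hx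
      exact hasDeriv_LL α hα x ⟨hx.1.le, by linarith [hx.2, ht.2]⟩
    · intro x hx
      have hx' : x ∈ Ico (0:ℝ) 1 := ⟨hx.1.le, by linarith [hx.2, ht.2]⟩
      exact div_nonneg (LL_pos _ x hx').le (by linarith [hx'.2])
  have hsub : Ioo (0:ℝ) 1 ⊆ Ioc 0 t ∪ Ioo t 1 := by
    intro x hx
    rcases le_or_gt x t with h | h
    · exact Or.inl ⟨hx.1, h⟩
    · exact Or.inr ⟨h, hx.2⟩
  have A1 : ∫⁻ r in Ioc (0:ℝ) t, ENNReal.ofReal (LL (α - 1) r / (1 - t * r)) ≤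
      ENNReal.ofReal (1 / α * LL α t) := by
    calc _ ≤ ∫⁻ r in Ioc (0:ℝ) t, ENNReal.ofReal (LL (α - 1) r / (1 - r)) := by
          refine setLIntegral_mono' measurableSet_Ioc fun r hr => ?_
          have hx' : r ∈ Ico (0:ℝ) 1 := ⟨hr.1.le, by linarith [hr.2, ht.2]⟩
          apply ENNReal.ofReal_le_ofReal
          apply div_le_div_of_nonneg_left (LL_pos _ r hx').le (by linarith [hx'.2])
          nlinarith [hx'.1, ht.2]
      _ = ENNReal.ofReal (∫ r in Ioc (0:ℝ) t, LL (α - 1) r / (1 - r)) := by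
          rw [ofReal_integral_eq_lintegral_ofReal hint]
          refine (ae_restrict_iff' measurableSet_Ioc).2 (Eventually.of_forall fun x hx => ?_)
          have hx' : x ∈ Ico (0:ℝ) 1 := ⟨hx.1.le, by linarith [hx.2, ht.2]⟩
          exact div_nonneg (LL_pos _ x hx').le (by linarith [hx'.2])
      _ ≤ _ := by
          apply ENNReal.ofReal_le_ofReal
          rw [← intervalIntegral.integral_of_le ht.1,
            intervalIntegral.integral_eq_sub_of_hasDerivAt (f := fun r => LL α r / α)]
          · have : 0 < LL α 0 / α := by positivity
            have e : 1 / α * LL α t = LL α t / α := by ring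
            simp only [e]; linarith
          · intro x hx
            rw [uIcc_of_le ht.1] at hx
            exact hasDeriv_LL α hα x ⟨hx.1, by linarith [hx.2, ht.2]⟩
          · rw [intervalIntegrable_iff_integrableOn_Ioc_of_le ht.1]; exact hint
  have A2 : ∫⁻ r in Ioo t 1, ENNReal.ofReal (LL (α - 1) r / (1 - t * r)) ≤
      ENNReal.ofReal (1 / Real.log 2 * LL α t) := by
    calc _ ≤ ∫⁻ r in Ioo t 1, ENNReal.ofReal (LL (α - 1) t / (1 - t)) := by
          refine setLIntegral_mono' measurableSet_Ioo fun r hr => ?_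
          have hx' : r ∈ Ico (0:ℝ) 1 := ⟨by linarith [hr.1, ht.1], hr.2⟩
          apply ENNReal.ofReal_le_ofReal
          apply div_le_div₀ (LL_pos _ t ht).le
            (LL_anti (α - 1) (by linarith) ht hx' hr.1.le) h1
          nlinarith [hx'.2, ht.1]
      _ = ENNReal.ofReal (LL (α - 1) t) := by
          rw [setLIntegral_const, Real.volume_Ioo,
            ← ENNReal.ofReal_mul (div_nonneg (LL_pos _ t ht).le h1.le)]
          congr 1
          field_simp
      _ ≤ _ := by
          apply ENNReal.ofReal_le_ofReal
          have hp := log_pos' t ht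
          have : LL (α - 1) t = LL α t / Real.log (2 / (1 - t)) := by
            unfold LL; rw [Real.rpow_sub_one hp.ne']
          rw [this, one_div, inv_mul_eq_div]
          exact div_le_div_of_nonneg_left hL.le hlog2 (log_ge t ht)
  calc _ ≤ ∫⁻ r in Ioc 0 t ∪ Ioo t 1, ENNReal.ofReal (LL (α - 1) r / (1 - t * r)) :=
        lintegral_mono_set hsub
    _ ≤ _ := (lintegral_union_le _ _ _).trans (add_le_add A1 A2)
    _ = _ := by
        rw [← ENNReal.ofReal_add (by positivity) (by positivity), add_mul]

lemma disc (α : ℝ) (hα : 0 < α) (hα1 : α < 1) (t : ℝ) (ht : t ∈ Ico (0:ℝ) 1) :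
    ∫⁻ z in ball (0:ℂ) 1, ENNReal.ofReal (1 / ‖1 - (t:ℂ) * z‖ ^ 2 * LL (α - 1) ‖z‖) ≤
      ENNReal.ofReal (2 * Real.pi * (1 / α + 1 / Real.log 2)) * ENNReal.ofReal (LL α t) := by
  have hpi := Real.pi_pos
  have hlog2 : 0 < Real.log 2 := Real.log_pos (by norm_num)
  have hLm := LL_meas (α - 1)
  rw [← lintegral_indicator measurableSet_ball, ← Complex.lintegral_comp_polarCoord_symm,
    polarCoord_target, Measure.volume_eq_prod, ← Measure.prod_restrict]
  have hmeas : Measurable (fun z : ℂ => (ball (0:ℂ) 1).indicator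
      (fun z => ENNReal.ofReal (1 / ‖1 - (t:ℂ) * z‖ ^ 2 * LL (α - 1) ‖z‖)) z) := by
    apply Measurable.indicator _ measurableSet_ball
    fun_prop
  rw [lintegral_prod]
  swap
  · apply Measurable.aemeasurable
    simp only [smul_eq_mul]
    apply Measurable.mul (by fun_prop)
    apply hmeas.comp
    have e : (fun p : ℝ × ℝ => Complex.polarCoord.symm p) =
        fun p : ℝ × ℝ => (p.1 : ℂ) * (Real.cos p.2 + Real.sin p.2 * Complex.I) := by
      funext p; rw [Complex.polarCoord_symm_apply]
    change Measurable (fun p : ℝ × ℝ => Complex.polarCoord.symm p)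
    rw [e]
    fun_prop
  calc _ ≤ ∫⁻ r in Ioi (0:ℝ), (Ioo (0:ℝ) 1).indicator (fun r =>
        ENNReal.ofReal (2 * Real.pi) * ENNReal.ofReal (LL (α - 1) r / (1 - t * r))) r := by
        refine setLIntegral_mono' measurableSet_Ioi fun r hr => ?_
        have hr0 : (0:ℝ) < r := hr
        have hz : ∀ θ : ℝ, Complex.polarCoord.symm (r, θ) = r * Complex.exp (θ * Complex.I) := by
          intro θ; rw [Complex.polarCoord_symm_apply, Complex.exp_mul_I]; push_cast; ring
        have hzn : ∀ θ : ℝ, ‖(r:ℂ) * Complex.exp (θ * Complex.I)‖ = r := by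
          intro θ; simp [Complex.norm_exp_ofReal_mul_I, abs_of_pos hr0]
        simp_rw [hz]
        by_cases h1 : r < 1
        · have hr' : r ∈ Ico (0:ℝ) 1 := ⟨hr0.le, h1⟩
          have hρ : t * r ∈ Ico (0:ℝ) 1 :=
            ⟨mul_nonneg ht.1 hr0.le, by nlinarith [ht.1, ht.2]⟩
          have hLp := LL_pos (α - 1) r hr'
          rw [indicator_of_mem (show r ∈ Ioo (0:ℝ) 1 from ⟨hr0, h1⟩)]
          calc _ ≤ ∫⁻ θ in Ioo (-Real.pi) Real.pi, ENNReal.ofReal (LL (α - 1) r) *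
                ENNReal.ofReal (1 / ‖1 - ((t * r : ℝ):ℂ) * Complex.exp (θ * Complex.I)‖ ^ 2) := by
                refine lintegral_mono fun θ => ?_
                rw [indicator_of_mem (by rw [mem_ball_zero_iff, hzn]; exact h1), hzn, smul_eq_mul,
                  ← ENNReal.ofReal_mul hr0.le, ← ENNReal.ofReal_mul hLp.le]
                apply ENNReal.ofReal_le_ofReal
                push_cast
                rw [← mul_assoc (t:ℂ)]
                have : 0 ≤ 1 / ‖1 - (t:ℂ) * r * Complex.exp (θ * Complex.I)‖ ^ 2 := by positivity
                have h3 := mul_nonneg this hLp.le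
                nlinarith
            _ ≤ ENNReal.ofReal (LL (α - 1) r) * ENNReal.ofReal (2 * Real.pi / (1 - t * r)) := by
                rw [lintegral_const_mul' _ _ ENNReal.ofReal_ne_top]
                gcongr
                exact angular _ hρ
            _ = _ := by
                rw [← ENNReal.ofReal_mul hLp.le, ← ENNReal.ofReal_mul (by positivity)]
                congr 1; ring
        · have : ∀ θ : ℝ, (r:ℂ) * Complex.exp (θ * Complex.I) ∉ ball (0:ℂ) 1 := by
            intro θ; rw [mem_ball_zero_iff, hzn]; exact h1
          simp [indicator_of_notMem (this _)]
    _ = ∫⁻ r in Ioo (0:ℝ) 1, ENNReal.ofReal (2 * Real.pi) *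
          ENNReal.ofReal (LL (α - 1) r / (1 - t * r)) := by
        rw [lintegral_indicator measurableSet_Ioo, Measure.restrict_restrict measurableSet_Ioo]
        congr 2
        ext x; simp; tauto
    _ ≤ _ := by
        rw [lintegral_const_mul' _ _ ENNReal.ofReal_ne_top,
          ENNReal.ofReal_mul (p := 2 * Real.pi) (by positivity),
          mul_assoc, ← ENNReal.ofReal_mul (p := 1 / α + 1 / Real.log 2) (by positivity)]
        gcongr
        exact radial α hα hα1 t ht

end HmuAux

namespace HmuAux

lemma meas_f (μ : Measure ℝ) (hae : μ.restrict (Ico 0 1) = μ)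
    (f : ℂ → ℂ) (hf : DifferentiableOn ℂ f (ball 0 1)) :
    AEStronglyMeasurable (fun t : ℝ => f t) μ := by
  rw [← hae]
  apply ContinuousOn.aestronglyMeasurable _ measurableSet_Ico
  apply hf.continuousOn.comp (by fun_prop)
  intro t ht
  simp [abs_of_nonneg ht.1, ht.2]

lemma denom_lower (t : ℝ) (ht : t ∈ Ico (0:ℝ) 1) (x : ℂ) : 1 - ‖x‖ ≤ ‖1 - (t:ℂ) * x‖ := by
  have h := norm_sub_norm_le (1:ℂ) ((t:ℂ) * x)
  rw [norm_one, norm_mul, Complex.norm_real, Real.norm_eq_abs, abs_of_nonneg ht.1] at h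
  nlinarith [norm_nonneg x, ht.2]

lemma imu_int (μ : Measure ℝ) (hae : ∀ᵐ t ∂μ, t ∈ Ico (0:ℝ) 1) (f : ℂ → ℂ)
    (hint : Integrable (fun t : ℝ => f t) μ) (z : ℂ) (hz : z ∈ ball (0:ℂ) 1) :
    Integrable (fun t : ℝ => f t / (1 - (t:ℂ) * z)) μ := by
  have hz1 : 0 < 1 - ‖z‖ := by rw [mem_ball_zero_iff] at hz; linarith
  refine (hint.norm.div_const (1 - ‖z‖)).mono' ?_ ?_
  · apply AEMeasurable.aestronglyMeasurable
    have := hint.aestronglyMeasurable.aemeasurable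
    exact this.div (by fun_prop)
  · filter_upwards [hae] with t ht
    rw [norm_div]
    have := denom_lower t ht z
    gcongr

lemma imu_deriv (μ : Measure ℝ) (hae : ∀ᵐ t ∂μ, t ∈ Ico (0:ℝ) 1) (f : ℂ → ℂ)
    (hint : Integrable (fun t : ℝ => f t) μ) (z : ℂ) (hz : z ∈ ball (0:ℂ) 1) :
    HasDerivAt (fun z => ∫ t : ℝ, f t / (1 - (t:ℂ) * z) ∂μ)
      (∫ t : ℝ, f t * t / (1 - (t:ℂ) * z) ^ 2 ∂μ) z := by
  have hz' := hz
  rw [mem_ball_zero_iff] at hz'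
  set ρ := (1 + ‖z‖) / 2 with hρ
  have hρ1 : 0 < 1 - ρ := by rw [hρ]; linarith
  have hm := hint.aestronglyMeasurable.aemeasurable
  have hball : ball (0:ℂ) ρ ⊆ ball 0 1 := ball_subset_ball (by linarith)
  refine (hasDerivAt_integral_of_dominated_loc_of_deriv_le (s := ball (0:ℂ) ρ)
    (F := fun z (t:ℝ) => f t / (1 - (t:ℂ) * z))
    (F' := fun z (t:ℝ) => f t * t / (1 - (t:ℂ) * z) ^ 2)
    (bound := fun t : ℝ => ‖f t‖ / (1 - ρ) ^ 2) ?_ ?_ (imu_int μ hae f hint z hz) ?_ ?_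
    (hint.norm.div_const _) ?_).2
  · exact isOpen_ball.mem_nhds (by rw [mem_ball_zero_iff, hρ]; linarith)
  · exact Eventually.of_forall fun x => (hm.div (by fun_prop)).aestronglyMeasurable
  · exact ((hm.mul (by fun_prop)).div (by fun_prop)).aestronglyMeasurable
  · filter_upwards [hae] with t ht x hx
    rw [mem_ball_zero_iff] at hx
    have := denom_lower t ht x
    rw [norm_div, norm_mul, norm_pow, Complex.norm_real, Real.norm_eq_abs, abs_of_nonneg ht.1]
    apply div_le_div₀ (norm_nonneg _) _ (by positivity)
    · gcongr; linarith
    · nlinarith [norm_nonneg (f t), ht.2]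
  · filter_upwards [hae] with t ht x hx
    rw [mem_ball_zero_iff] at hx
    have h1 := denom_lower t ht x
    have hne : 1 - (t:ℂ) * x ≠ 0 := by
      rw [← norm_pos_iff]; linarith
    have e1 : HasDerivAt (fun x : ℂ => 1 - (t:ℂ) * x) (-(t:ℂ)) x := by
      simpa using ((hasDerivAt_id x).const_mul (t:ℂ)).const_sub 1
    have e2 := (e1.inv hne).const_mul (f t)
    convert! e2 using 1
    ring

lemma main_est (α : ℝ) (hα : 0 < α) (hα1 : α < 1) (μ : Measure ℝ) [IsFiniteMeasure μ]
    (hre : μ.restrict (Ico 0 1) = μ) (hae : ∀ᵐ t ∂μ, t ∈ Ico (0:ℝ) 1) (f : ℂ → ℂ)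
    (hint : Integrable (fun t : ℝ => f t) μ) :
    ∫⁻ z in ball (0:ℂ) 1, ENNReal.ofReal
      (‖deriv (fun z => ∫ t : ℝ, f t / (1 - (t:ℂ) * z) ∂μ) z‖ * LL (α - 1) ‖z‖) ≤
    ENNReal.ofReal (2 * Real.pi * (1 / α + 1 / Real.log 2)) *
      ∫⁻ t in Ico (0:ℝ) 1, ENNReal.ofReal ‖f t‖ * ENNReal.ofReal (LL α t) ∂μ := by
  have hm := hint.aestronglyMeasurable.aemeasurable
  have hLm := LL_meas (α - 1)
  calc _ ≤ ∫⁻ z in ball (0:ℂ) 1, ∫⁻ t, ENNReal.ofReal ‖f t‖ *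
        ENNReal.ofReal (1 / ‖1 - (t:ℂ) * z‖ ^ 2 * LL (α - 1) ‖z‖) ∂μ := by
        refine setLIntegral_mono' measurableSet_ball fun z hz => ?_
        have hz' : ‖z‖ ∈ Ico (0:ℝ) 1 := ⟨norm_nonneg z, by rwa [mem_ball_zero_iff] at hz⟩
        have hLp := LL_pos (α - 1) ‖z‖ hz'
        rw [(imu_deriv μ hae f hint z hz).deriv, ENNReal.ofReal_mul (norm_nonneg _), ofReal_norm]
        calc _ ≤ (∫⁻ t : ℝ, ‖f t * t / (1 - (t:ℂ) * z) ^ 2‖ₑ ∂μ) *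
              ENNReal.ofReal (LL (α - 1) ‖z‖) := by
              gcongr; exact enorm_integral_le_lintegral_enorm _
          _ = ∫⁻ t : ℝ, ‖f t * t / (1 - (t:ℂ) * z) ^ 2‖ₑ * ENNReal.ofReal (LL (α - 1) ‖z‖) ∂μ := by
              rw [lintegral_mul_const' _ _ ENNReal.ofReal_ne_top]
          _ ≤ _ := by
              refine lintegral_mono_ae ?_
              filter_upwards [hae] with t ht
              rw [← ofReal_norm, ← ENNReal.ofReal_mul (norm_nonneg _),
                ← ENNReal.ofReal_mul (norm_nonneg _)]
              apply ENNReal.ofReal_le_ofReal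
              rw [← mul_assoc]
              apply mul_le_mul_of_nonneg_right _ hLp.le
              rw [norm_div, norm_mul, norm_pow, Complex.norm_real, Real.norm_eq_abs,
                abs_of_nonneg ht.1, mul_one_div]
              gcongr
              nlinarith [norm_nonneg (f t), ht.2]
    _ = ∫⁻ t, (∫⁻ z in ball (0:ℂ) 1, ENNReal.ofReal ‖f t‖ *
        ENNReal.ofReal (1 / ‖1 - (t:ℂ) * z‖ ^ 2 * LL (α - 1) ‖z‖)) ∂μ := by
        apply lintegral_lintegral_swap
        have m1 : AEMeasurable (fun p : ℂ × ℝ => ENNReal.ofReal ‖f p.2‖)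
            ((volume.restrict (ball (0:ℂ) 1)).prod μ) :=
          (hm.comp_snd (μ := volume.restrict (ball (0:ℂ) 1))).norm.ennreal_ofReal
        have m2 : Measurable (fun p : ℂ × ℝ =>
            ENNReal.ofReal (1 / ‖1 - (p.2:ℂ) * p.1‖ ^ 2 * LL (α - 1) ‖p.1‖)) := by
          fun_prop
        exact m1.mul m2.aemeasurable
    _ = ∫⁻ t in Ico (0:ℝ) 1, ENNReal.ofReal ‖f t‖ * (∫⁻ z in ball (0:ℂ) 1,
        ENNReal.ofReal (1 / ‖1 - (t:ℂ) * z‖ ^ 2 * LL (α - 1) ‖z‖)) ∂μ := by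
        rw [hre]
        refine lintegral_congr fun t => ?_
        rw [lintegral_const_mul' _ _ ENNReal.ofReal_ne_top]
    _ ≤ ∫⁻ t in Ico (0:ℝ) 1, ENNReal.ofReal (2 * Real.pi * (1 / α + 1 / Real.log 2)) *
          (ENNReal.ofReal ‖f t‖ * ENNReal.ofReal (LL α t)) ∂μ := by
        refine setLIntegral_mono' measurableSet_Ico fun t ht => ?_
        rw [mul_left_comm]
        gcongr
        exact disc α hα hα1 t ht
    _ = _ := by rw [lintegral_const_mul' _ _ ENNReal.ofReal_ne_top]

end HmuAux

/-- If `0 < α < 1` and `μ` is an `α`-logarithmic `1`-Carleson measure, then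
there is `C > 0` such that for every `f ∈ H¹` the function `I_μ f` is well defined and
analytic in `𝔻` and `∫_𝔻 |(I_μ f)′(z)| (log(2/(1-|z|)))^{α-1} dA(z) ≤ C ‖f‖_{H¹}`. -/
theorem hmu_H1_to_D1log (α : ℝ) (hα0 : 0 < α) (hα1 : α < 1)
    (μ : Measure ℝ) [IsFiniteMeasure μ] (hsupp : μ (Ico (0 : ℝ) 1)ᶜ = 0)
    (hμ : ∃ C > 0, ∀ t ∈ Ico (0 : ℝ) 1,
      (μ (Ico t 1)).toReal * (Real.log (2 / (1 - t))) ^ α ≤ C * (1 - t)) :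
    ∃ C > 0, ∀ f : ℂ → ℂ, DifferentiableOn ℂ f (ball (0 : ℂ) 1) → hardyNorm f < ⊤ →
      (∀ z ∈ ball (0 : ℂ) 1, Integrable (fun t : ℝ => f (t : ℂ) / (1 - (t : ℂ) * z)) μ) ∧
      DifferentiableOn ℂ (Imu μ f) (ball (0 : ℂ) 1) ∧
      (∫⁻ z in ball (0 : ℂ) 1,
          ENNReal.ofReal (‖deriv (Imu μ f) z‖ * (Real.log (2 / (1 - ‖z‖))) ^ (α - 1)) ∂dA)
        ≤ ENNReal.ofReal C * hardyNorm f := by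
  obtain ⟨C₀, hC₀, hμ'⟩ := hμ
  have hpi := Real.pi_pos
  have hlog2 : 0 < Real.log 2 := Real.log_pos (by norm_num)
  have hae : ∀ᵐ t ∂μ, t ∈ Ico (0:ℝ) 1 := by rw [ae_iff]; exact hsupp
  have hre : μ.restrict (Ico 0 1) = μ := Measure.restrict_eq_self_of_ae_mem hae
  have hB : 0 < 1 / α + 1 / Real.log 2 := by positivity
  refine ⟨Real.pi⁻¹ * (2 * Real.pi * (1 / α + 1 / Real.log 2) *
    (4 * C₀ * (512 * (2 * Real.pi)))), by positivity, fun f hf hH => ?_⟩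
  have hN : ∀ r ∈ Ico (0:ℝ) 1, ∫⁻ θ in Ioc (0 : ℝ) (2 * Real.pi),
      ENNReal.ofReal ‖f ((r : ℂ) * Complex.exp ((θ : ℂ) * Complex.I))‖ ≤
      ENNReal.ofReal (2 * Real.pi) * hardyNorm f := by
    intro r hr
    have h1 : (ENNReal.ofReal (2 * Real.pi))⁻¹ * ∫⁻ θ in Ioc (0 : ℝ) (2 * Real.pi),
        ENNReal.ofReal ‖f ((r : ℂ) * Complex.exp ((θ : ℂ) * Complex.I))‖ ≤ hardyNorm f :=
      le_iSup₂ (f := fun (r : ℝ) (_ : r ∈ Ico (0:ℝ) 1) =>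
        (ENNReal.ofReal (2 * Real.pi))⁻¹ * ∫⁻ θ in Ioc (0 : ℝ) (2 * Real.pi),
        ENNReal.ofReal ‖f ((r : ℂ) * Complex.exp ((θ : ℂ) * Complex.I))‖) r hr
    have h2 : ENNReal.ofReal (2 * Real.pi) ≠ 0 := by
      rw [ne_eq, ENNReal.ofReal_eq_zero]; push Not; positivity
    calc _ = ENNReal.ofReal (2 * Real.pi) * ((ENNReal.ofReal (2 * Real.pi))⁻¹ *
          ∫⁻ θ in Ioc (0 : ℝ) (2 * Real.pi),
          ENNReal.ofReal ‖f ((r : ℂ) * Complex.exp ((θ : ℂ) * Complex.I))‖) := by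
          rw [← mul_assoc, ENNReal.mul_inv_cancel h2 ENNReal.ofReal_ne_top, one_mul]
      _ ≤ _ := by gcongr
  have hE := HmuAux.embedding α hα0 hα1 μ C₀ hC₀ hμ' f hf _ hN
  have hint : Integrable (fun t : ℝ => f t) μ := by
    refine ⟨HmuAux.meas_f μ hre f hf, ?_⟩
    have hL0 := HmuAux.LL_pos α 0 (by simp)
    have hlt : ENNReal.ofReal (HmuAux.LL α 0)⁻¹ *
        (∫⁻ t in Ico (0:ℝ) 1, ENNReal.ofReal ‖f t‖ * ENNReal.ofReal (HmuAux.LL α t) ∂μ) < ⊤ := by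
      refine ENNReal.mul_lt_top ENNReal.ofReal_lt_top (lt_of_le_of_lt hE ?_)
      exact ENNReal.mul_lt_top ENNReal.ofReal_lt_top (ENNReal.mul_lt_top (by simp)
        (ENNReal.mul_lt_top ENNReal.ofReal_lt_top hH))
    refine lt_of_le_of_lt ?_ hlt
    rw [← lintegral_const_mul' _ _ ENNReal.ofReal_ne_top]
    conv_lhs => rw [← hre]
    refine setLIntegral_mono' measurableSet_Ico fun t ht => ?_
    rw [← ofReal_norm, ← ENNReal.ofReal_mul (norm_nonneg _),
      ← ENNReal.ofReal_mul (inv_pos.2 hL0).le]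
    apply ENNReal.ofReal_le_ofReal
    have h3 := HmuAux.LL_mono α hα0 (by simp) ht ht.1
    rw [inv_mul_eq_div, le_div_iff₀ hL0]
    gcongr
  refine ⟨fun z hz => HmuAux.imu_int μ hae f hint z hz, fun z hz =>
    (HmuAux.imu_deriv μ hae f hint z hz).differentiableAt.differentiableWithinAt, ?_⟩
  have hM := HmuAux.main_est α hα0 hα1 μ hre hae f hint
  rw [dA, Measure.restrict_smul, lintegral_smul_measure, smul_eq_mul,
    ← ENNReal.ofReal_inv_of_pos hpi]
  calc _ ≤ ENNReal.ofReal Real.pi⁻¹ *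
        (ENNReal.ofReal (2 * Real.pi * (1 / α + 1 / Real.log 2)) *
          (ENNReal.ofReal (4 * C₀) * (512 * (ENNReal.ofReal (2 * Real.pi) * hardyNorm f)))) :=
        mul_le_mul' le_rfl (hM.trans (mul_le_mul' le_rfl hE))
    _ = _ := by
        rw [show (512 : ℝ≥0∞) = ENNReal.ofReal 512 by simp,
          ENNReal.ofReal_mul (p := Real.pi⁻¹) (by positivity),
          ENNReal.ofReal_mul (p := 2 * Real.pi * (1 / α + 1 / Real.log 2)) (by positivity),
          ENNReal.ofReal_mul (p := 4 * C₀) (by positivity),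
          ENNReal.ofReal_mul (p := 512) (by positivity)]
        ring
end

section
/- Every function f in the Dirichlet-type space 𝒟^1_0 belongs to the Hardy space H^1 and satisfies ‖f‖_{H^1} ≤ 2 ‖f‖_{𝒟^1_0}. -/
open MeasureTheory Set Metric Filter Asymptotics
open scoped ENNReal

/-- Unnormalized circle mean of `‖g‖`. -/
noncomputable def circMean (g : ℂ → ℂ) (s : ℝ) : ℝ≥0∞ :=
  ∫⁻ θ in Ioc (0 : ℝ) (2 * Real.pi), ‖g (circleMap 0 s θ)‖ₑ

lemma measurable_circ {g : ℂ → ℂ} (hg : Measurable g) :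
    Measurable (fun p : ℝ × ℝ => ‖g (circleMap 0 p.1 p.2)‖ₑ) := by
  have : Measurable (fun p : ℝ × ℝ => circleMap 0 p.1 p.2) := by
    unfold circleMap
    fun_prop
  exact (hg.comp this).enorm

lemma measurable_circMean {g : ℂ → ℂ} (hg : Measurable g) : Measurable (circMean g) := by
  unfold circMean
  exact (measurable_circ hg).lintegral_prod_right'

lemma circ_periodic (g : ℂ → ℂ) (s : ℝ) :
    ∫⁻ θ in Ioo (-Real.pi) Real.pi, ‖g (circleMap 0 s θ)‖ₑ = circMean g s := by
  rw [setLIntegral_congr Ioo_ae_eq_Ioc]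
  have h1 := isAddFundamentalDomain_Ioc Real.two_pi_pos (-Real.pi)
  have h2 := isAddFundamentalDomain_Ioc Real.two_pi_pos 0
  have h := h1.setLIntegral_eq h2 (fun θ => ‖g (circleMap 0 s θ)‖ₑ) ?_
  · unfold circMean
    rw [zero_add, show -Real.pi + 2 * Real.pi = Real.pi by ring] at h
    exact h
  · rintro ⟨x, hx⟩ θ
    obtain ⟨n, rfl⟩ := AddSubgroup.mem_zmultiples_iff.1 hx
    have := ((periodic_circleMap 0 s).zsmul n) θ
    simp only [AddSubgroup.vadd_def, vadd_eq_add, add_comm _ θ, this]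

lemma area_polar {g : ℂ → ℂ} (hg : Measurable g) :
    ∫⁻ z in ball (0 : ℂ) 1, ‖g z‖ₑ = ∫⁻ s in Ioo (0 : ℝ) 1, ENNReal.ofReal s * circMean g s := by
  rw [← lintegral_indicator measurableSet_ball, ← Complex.lintegral_comp_polarCoord_symm,
    polarCoord_target, Measure.volume_eq_prod, setLIntegral_prod]
  · rw [← Ioi_inter_Iio (a := (0 : ℝ)) (b := 1), inter_comm, ← setLIntegral_indicator measurableSet_Iio]
    refine setLIntegral_congr_fun measurableSet_Ioi fun s hs => ?_
    have hs : 0 < s := hs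
    have key : ∀ θ : ℝ, Complex.polarCoord.symm (s, θ) = circleMap 0 s θ := by
      intro θ
      rw [Complex.polarCoord_symm_apply, circleMap, Complex.exp_mul_I]
      simp
    simp only [key, smul_eq_mul]
    by_cases h1 : s < 1
    · rw [indicator_of_mem (show s ∈ Iio 1 from h1), lintegral_const_mul' _ _ ENNReal.ofReal_ne_top,
        ← circ_periodic]
      congr 1
      refine lintegral_congr fun θ => ?_
      rw [indicator_of_mem]
      simp [abs_of_pos hs, h1]
    · rw [indicator_of_notMem (show s ∉ Iio 1 from h1)]
      rw [lintegral_eq_zero_of_ae_eq_zero]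
      refine Eventually.of_forall fun θ => ?_
      beta_reduce
      rw [indicator_of_notMem] <;> simp [abs_of_pos hs, not_lt.1 h1]
  · have : Measurable (fun p : ℝ × ℝ => Complex.polarCoord.symm p) := by
      simp only [Complex.polarCoord_symm_apply]
      fun_prop
    have h2 : Measurable ((ball (0 : ℂ) 1).indicator fun z => ‖g z‖ₑ) :=
      hg.enorm.indicator measurableSet_ball
    have h3 := h2.comp this
    simp only [smul_eq_mul]
    exact ((by fun_prop : Measurable fun p : ℝ × ℝ => ENNReal.ofReal p.1).mul h3).aemeasurable

lemma cauchy_bound_s3 {g : ℂ → ℂ} (hg : DifferentiableOn ℂ g (ball (0 : ℂ) 1)) {s : ℝ}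
    (hs : 0 < s) (hs4 : s < 1 / 4) :
    circMean g s ≤ 2 * circMean g (3 / 4 + s) := by
  set t : ℝ := 3 / 4 + s with ht
  have pw : ∀ θ : ℝ, ENNReal.ofReal (2 * Real.pi) * ‖g (circleMap 0 s θ)‖ₑ ≤ 2 * circMean g t := by
    intro θ
    have hw : circleMap 0 s θ ∈ ball (0 : ℂ) t := by
      simp [abs_of_pos hs, ht]
    have hd : DifferentiableOn ℂ g (closedBall 0 t) :=
      hg.mono (closedBall_subset_ball (by linarith))
    have hc := Complex.circleIntegral_sub_inv_smul_of_differentiable_on_off_countable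
      countable_empty hw hd.continuousOn
      (fun x hx => hd.differentiableAt (closedBall_mem_nhds_of_mem hx.1))
    have h1 := congrArg (fun z : ℂ => ‖z‖ₑ) hc
    simp only [enorm_smul] at h1
    have h2 : ‖(2 * Real.pi * Complex.I : ℂ)‖ₑ = ENNReal.ofReal (2 * Real.pi) := by
      rw [← ofReal_norm]
      simp [abs_of_pos Real.pi_pos]
    rw [h2] at h1
    rw [← h1, circleIntegral, intervalIntegral.integral_of_le Real.two_pi_pos.le]
    refine (enorm_integral_le_lintegral_enorm _).trans ?_
    unfold circMean
    rw [← lintegral_const_mul' _ _ (by simp)]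
    refine lintegral_mono fun φ => ?_
    rw [← smul_assoc, enorm_smul]
    gcongr
    rw [← ofReal_norm, show (2 : ℝ≥0∞) = ENNReal.ofReal 2 by simp]
    apply ENNReal.ofReal_le_ofReal
    have h3 : (3 / 4 : ℝ) ≤ ‖circleMap 0 t φ - circleMap 0 s θ‖ := by
      have := norm_sub_norm_le (circleMap 0 t φ) (circleMap 0 s θ)
      simp only [norm_circleMap_zero] at this
      rw [abs_of_pos hs, abs_of_pos (by linarith)] at this
      linarith
    rw [smul_eq_mul, norm_mul, norm_inv, ← div_eq_mul_inv, div_le_iff₀ (by linarith)]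
    simp only [deriv_circleMap, norm_mul, norm_circleMap_zero, Complex.norm_I, mul_one]
    rw [abs_of_pos (by linarith)]
    linarith
  have hpi : ENNReal.ofReal (2 * Real.pi) ≠ 0 := by simp [Real.pi_pos]
  have h : ENNReal.ofReal (2 * Real.pi) * circMean g s
      ≤ ENNReal.ofReal (2 * Real.pi) * (2 * circMean g t) := by
    rw [circMean, ← lintegral_const_mul' _ _ ENNReal.ofReal_ne_top]
    refine (lintegral_mono pw).trans ?_
    simp [mul_comm]
  exact (ENNReal.mul_le_mul_iff_right hpi ENNReal.ofReal_ne_top).1 h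

lemma mean_bound {g : ℂ → ℂ} (hg : DifferentiableOn ℂ g (ball (0 : ℂ) 1)) (hm : Measurable g) :
    ∫⁻ s in Ioo (0 : ℝ) 1, circMean g s
      ≤ 4 * ∫⁻ s in Ioo (0 : ℝ) 1, ENNReal.ofReal s * circMean g s := by
  have hM := measurable_circMean hm
  have hsplit : Ioo (0 : ℝ) 1 = Ioo 0 (1 / 4) ∪ Ico (1 / 4) 1 :=
    (Ioo_union_Ico_eq_Ioo (by norm_num) (by norm_num)).symm
  have h1 : ∫⁻ s in Ioo (0 : ℝ) (1 / 4), circMean g s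
      ≤ ∫⁻ s in Ioo (3 / 4 : ℝ) 1, 2 * circMean g s := by
    have := (measurePreserving_add_left (volume : Measure ℝ) (3 / 4)).setLIntegral_comp_preimage_emb
      (measurableEmbedding_addLeft _) (fun s => 2 * circMean g s) (Ioo (3 / 4) 1)
    rw [← this]
    have e : (fun x : ℝ => 3 / 4 + x) ⁻¹' Ioo (3 / 4) 1 = Ioo 0 (1 / 4) := by
      ext x; simp only [mem_preimage, mem_Ioo]; constructor <;> rintro ⟨a, b⟩ <;> constructor <;> linarith
    rw [e]
    exact setLIntegral_mono' measurableSet_Ioo fun s hs => cauchy_bound_s3 hg hs.1 hs.2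
  have h2 : ∫⁻ s in Ioo (0 : ℝ) 1, circMean g s
      ≤ (∫⁻ s in Ioo (3 / 4 : ℝ) 1, 2 * circMean g s) + ∫⁻ s in Ico (1 / 4 : ℝ) 1, circMean g s := by
    rw [hsplit]
    exact (lintegral_union_le _ _ _).trans (add_le_add h1 le_rfl)
  refine h2.trans ?_
  have e1 : Ioo (3 / 4 : ℝ) 1 = Ioo (3 / 4) 1 ∩ Ioo 0 1 := by
    rw [inter_eq_left.2]; exact Ioo_subset_Ioo (by norm_num) le_rfl
  have e2 : Ico (1 / 4 : ℝ) 1 = Ico (1 / 4) 1 ∩ Ioo 0 1 := by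
    rw [inter_eq_left.2]; exact fun x hx => ⟨by linarith [hx.1], hx.2⟩
  rw [e1, e2, ← setLIntegral_indicator measurableSet_Ioo, ← setLIntegral_indicator measurableSet_Ico,
    ← lintegral_add_right _ (hM.indicator measurableSet_Ico), ← lintegral_const_mul' _ _ (by simp)]
  refine setLIntegral_mono' measurableSet_Ioo fun s hs => ?_
  rw [← mul_assoc]
  have four : (4 : ℝ≥0∞) * ENNReal.ofReal s = ENNReal.ofReal (4 * s) := by
    rw [ENNReal.ofReal_mul (by norm_num)]; simp
  rw [four]
  by_cases ha : s ∈ Ioo (3 / 4 : ℝ) 1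
  · have hb : s ∈ Ico (1 / 4 : ℝ) 1 := ⟨by linarith [ha.1], ha.2⟩
    rw [indicator_of_mem ha, indicator_of_mem hb]
    calc 2 * circMean g s + circMean g s = ENNReal.ofReal 3 * circMean g s := by
          rw [show ENNReal.ofReal 3 = 2 + 1 by rw [← ENNReal.ofReal_ofNat]; norm_num]; ring
      _ ≤ _ := by gcongr; linarith [ha.1]
  · rw [indicator_of_notMem ha, zero_add]
    by_cases hb : s ∈ Ico (1 / 4 : ℝ) 1
    · rw [indicator_of_mem hb]
      calc circMean g s = ENNReal.ofReal 1 * circMean g s := by simp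
        _ ≤ _ := by gcongr; linarith [hb.1]
    · rw [indicator_of_notMem hb]; exact zero_le

lemma ftc_bound {f : ℂ → ℂ} (hf : DifferentiableOn ℂ f (ball (0 : ℂ) 1)) {r : ℝ}
    (hr0 : 0 ≤ r) (hr1 : r < 1) (θ : ℝ) :
    ‖f (circleMap 0 r θ)‖ₑ ≤ ‖f 0‖ₑ + ∫⁻ s in Ioo (0 : ℝ) 1, ‖deriv f (circleMap 0 s θ)‖ₑ := by
  have hmem : ∀ s ∈ Icc 0 r, circleMap 0 s θ ∈ ball (0 : ℂ) 1 := by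
    intro s hs
    simp only [mem_ball_zero_iff, norm_circleMap_zero]
    rw [abs_of_nonneg hs.1]; linarith [hs.2]
  have hline : ∀ s : ℝ, HasDerivAt (fun s : ℝ => circleMap 0 s θ) (Complex.exp (θ * Complex.I)) s := by
    intro s
    have := (Complex.ofRealCLM.hasDerivAt (x := s)).mul_const (Complex.exp (θ * Complex.I))
    simpa [circleMap] using this
  have hder : ∀ s ∈ uIcc 0 r, HasDerivAt (fun s : ℝ => f (circleMap 0 s θ))
      (deriv f (circleMap 0 s θ) * Complex.exp (θ * Complex.I)) s := by
    intro s hs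
    rw [uIcc_of_le hr0] at hs
    exact ((hf.differentiableAt (isOpen_ball.mem_nhds (hmem s hs))).hasDerivAt).comp s (hline s)
  have hint : IntervalIntegrable
      (fun s : ℝ => deriv f (circleMap 0 s θ) * Complex.exp (θ * Complex.I)) volume 0 r := by
    apply ContinuousOn.intervalIntegrable
    rw [uIcc_of_le hr0]
    refine ContinuousOn.mul ?_ continuousOn_const
    exact (hf.deriv isOpen_ball).continuousOn.comp
      (fun s _ => (hline s).continuousAt.continuousWithinAt) hmem
  have h := intervalIntegral.integral_eq_sub_of_hasDerivAt hder hint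
  have h' : f (circleMap 0 r θ) = f 0 +
      ∫ s in (0 : ℝ)..r, deriv f (circleMap 0 s θ) * Complex.exp (θ * Complex.I) := by
    rw [h]; simp [circleMap]
  rw [h', intervalIntegral.integral_of_le hr0]
  refine (enorm_add_le _ _).trans ?_
  gcongr
  refine (enorm_integral_le_lintegral_enorm _).trans ?_
  have hE : ‖Complex.exp (θ * Complex.I)‖ₑ = 1 := by
    rw [← ofReal_norm, Complex.norm_exp_ofReal_mul_I]; simp
  simp only [enorm_mul, hE, mul_one]
  exact lintegral_mono_set fun s hs => ⟨hs.1, hs.2.trans_lt hr1⟩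

/-- Every `f ∈ 𝒟¹₀` belongs to `H¹` with `‖f‖_{H¹} ≤ 2 ‖f‖_{𝒟¹₀}`. -/
theorem D10_subset_H1 (f : ℂ → ℂ) (hf : DifferentiableOn ℂ f (ball (0 : ℂ) 1))
    (hnorm : dirichletNorm 1 0 f < ⊤) :
    hardyNorm f < ⊤ ∧ hardyNorm f ≤ 2 * dirichletNorm 1 0 f := by
  have hle : hardyNorm f ≤ 2 * dirichletNorm 1 0 f := by
    have hgm : Measurable (deriv f) := measurable_deriv f
    have hg := hf.deriv isOpen_ball
    have hD : dirichletNorm 1 0 f = ‖f 0‖ₑ + (ENNReal.ofReal Real.pi)⁻¹ *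
        ∫⁻ s in Ioo (0 : ℝ) 1, ENNReal.ofReal s * circMean (deriv f) s := by
      rw [← area_polar hgm]
      simp [dirichletNorm, bergmanNorm, dA, ofReal_norm]
    have hP : ENNReal.ofReal (2 * Real.pi) = 2 * ENNReal.ofReal Real.pi := by
      rw [ENNReal.ofReal_mul (by norm_num)]; simp
    have hPi0 : ENNReal.ofReal Real.pi ≠ 0 := by simp [Real.pi_pos]
    have hP0 : ENNReal.ofReal (2 * Real.pi) ≠ 0 := by simp [Real.pi_pos]
    unfold hardyNorm
    refine iSup₂_le fun r hr => ?_
    set J := ∫⁻ s in Ioo (0 : ℝ) 1, ENNReal.ofReal s * circMean (deriv f) s with hJ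
    have h1 : ∫⁻ θ in Ioc (0 : ℝ) (2 * Real.pi),
        ENNReal.ofReal ‖f ((r : ℂ) * Complex.exp ((θ : ℂ) * Complex.I))‖
        ≤ ENNReal.ofReal (2 * Real.pi) * ‖f 0‖ₑ + 4 * J := by
      calc _ ≤ ∫⁻ θ in Ioc (0 : ℝ) (2 * Real.pi), (‖f 0‖ₑ +
            ∫⁻ s in Ioo (0 : ℝ) 1, ‖deriv f (circleMap 0 s θ)‖ₑ) := by
            refine lintegral_mono fun θ => ?_
            have := ftc_bound hf hr.1 hr.2 θ
            simp only [circleMap, zero_add] at this ⊢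
            rwa [ofReal_norm]
        _ = ENNReal.ofReal (2 * Real.pi) * ‖f 0‖ₑ + ∫⁻ s in Ioo (0 : ℝ) 1, circMean (deriv f) s := by
            rw [lintegral_add_left measurable_const]
            congr 1
            · simp [mul_comm]
            · rw [lintegral_lintegral_swap]
              · rfl
              · exact ((measurable_circ hgm).comp measurable_swap).aemeasurable
        _ ≤ _ := by gcongr; exact mean_bound hg hgm
    refine (mul_le_mul_right h1 _).trans ?_
    rw [hD, mul_add, mul_add, ← mul_assoc, ENNReal.inv_mul_cancel hP0 ENNReal.ofReal_ne_top]
    refine add_le_add (by gcongr; norm_num) ?_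
    rw [hP, ENNReal.mul_inv (by simp) (by simp), show (4 : ℝ≥0∞) = 2 * 2 by norm_num]
    apply le_of_eq
    calc _ = ((2 : ℝ≥0∞)⁻¹ * 2) * (2 * ((ENNReal.ofReal Real.pi)⁻¹ * J)) := by ring
      _ = _ := by rw [ENNReal.inv_mul_cancel (by simp) (by simp), one_mul]
  exact ⟨hle.trans_lt (ENNReal.mul_lt_top (by simp) hnorm), hle⟩
end
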